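/- Let D be a bounded domain in ℂ. Then D is an L²_h-domain of holomorphy if and only if for every w ∈ ∂D and every neighborhood U of w the set U \ D is not polar. -/

import Mathlib

open MeasureTheory Filter Topology Metric Set
open scoped ENNReal NNReal

/-- Truncated circle average of an `EReal`-valued function: the average over the circle of
center `c` and radius `R` of the function truncated below at `-n`. -/
noncomputable def circleAvgTrunc (u : ℂ → EReal) (c : ℂ) (R : ℝ) (n : ℕ) : ℝ :=
  (2 * Real.pi)⁻¹ * ∫ θ in (0:ℝ)..(2 * Real.pi),
    (max (u (c + R * Complex.exp (θ * Complex.I))) (-(n : ℝ) : EReal)).toReal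

/-- `u` is subharmonic on `Ω ⊆ ℂ`: values in `[-∞, ∞)`, upper semicontinuous on `Ω`, and for
every closed disc contained in `Ω` the value at the center is at most the mean over the
boundary circle (in the extended sense, via decreasing truncations). -/
def SubharmonicOn (u : ℂ → EReal) (Ω : Set ℂ) : Prop :=
  UpperSemicontinuousOn u Ω ∧ (∀ z ∈ Ω, u z < ⊤) ∧
    ∀ c ∈ Ω, ∀ R : ℝ, 0 < R → Metric.closedBall c R ⊆ Ω →
      u c ≤ ⨅ n : ℕ, (circleAvgTrunc u c R n : EReal)

/-- `u` is plurisubharmonic on `Ω`: values in `[-∞, ∞)`, upper semicontinuous on `Ω`, and its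
restriction to every complex line is subharmonic. -/
def PlurisubharmonicOn {E : Type*} [NormedAddCommGroup E] [NormedSpace ℂ E]
    (u : E → EReal) (Ω : Set E) : Prop :=
  UpperSemicontinuousOn u Ω ∧ (∀ z ∈ Ω, u z < ⊤) ∧
    ∀ a b : E, SubharmonicOn (fun lam : ℂ => u (a + lam • b)) {lam : ℂ | a + lam • b ∈ Ω}

/-- A set `P ⊆ ℂ` is polar. -/
def PolarSet (P : Set ℂ) : Prop :=
  ∀ z ∈ P, ∃ U : Set ℂ, IsOpen U ∧ IsConnected U ∧ z ∈ U ∧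
    ∃ u : ℂ → EReal, SubharmonicOn u U ∧ (∃ x ∈ U, u x ≠ ⊥) ∧ ∀ x ∈ P ∩ U, u x = ⊥

/-- A set `P ⊆ ℂⁿ` is pluripolar. -/
def PluripolarSet {E : Type*} [NormedAddCommGroup E] [NormedSpace ℂ E] (P : Set E) : Prop :=
  ∀ z ∈ P, ∃ U : Set E, IsOpen U ∧ IsConnected U ∧ z ∈ U ∧
    ∃ u : E → EReal, PlurisubharmonicOn u U ∧ (∃ x ∈ U, u x ≠ ⊥) ∧ ∀ x ∈ P ∩ U, u x = ⊥

/-- A domain `D` is pseudoconvex if `z ↦ -log dist(z, ∂D)` is plurisubharmonic on `D`. -/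
def IsPseudoconvex {E : Type*} [NormedAddCommGroup E] [NormedSpace ℂ E] (D : Set E) : Prop :=
  PlurisubharmonicOn (fun z => ((- Real.log (Metric.infDist z Dᶜ) : ℝ) : EReal)) D

/-- The square-integrable holomorphic functions on an open set `Ω`. -/
def L2h {E : Type*} [NormedAddCommGroup E] [NormedSpace ℂ E] [MeasureSpace E]
    (Ω : Set E) : Set (E → ℂ) :=
  {f | DifferentiableOn ℂ f Ω ∧ (∫⁻ z in Ω, (‖f z‖₊ : ℝ≥0∞) ^ 2) < ⊤}

/-- The Bergman kernel of `Ω` on the diagonal,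
`K_Ω(z) = sup { |f(z)|²/‖f‖²_{L²(Ω)} : f ∈ L²ₕ(Ω), f ≢ 0 }`. -/
noncomputable def bergmanKernel {E : Type*} [NormedAddCommGroup E] [NormedSpace ℂ E]
    [MeasureSpace E] (Ω : Set E) (z : E) : ℝ≥0∞ :=
  ⨆ (f : E → ℂ) (_ : f ∈ L2h Ω) (_ : ∃ w ∈ Ω, f w ≠ 0),
    (‖f z‖₊ : ℝ≥0∞) ^ 2 / ∫⁻ w in Ω, (‖f w‖₊ : ℝ≥0∞) ^ 2

/-- `D` is an `L²ₕ`-domain of holomorphy: there are no domains `D₀, D₁` with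
`∅ ≠ D₀ ⊆ D₁ ∩ D`, `D₁ ⊄ D`, such that every `f ∈ L²ₕ(D)` extends holomorphically to `D₁`
(agreeing with `f` on `D₀`). -/
def IsL2hDomainOfHolomorphy {E : Type*} [NormedAddCommGroup E] [NormedSpace ℂ E]
    [MeasureSpace E] (D : Set E) : Prop :=
  ¬ ∃ D0 D1 : Set E, IsOpen D0 ∧ IsConnected D0 ∧ IsOpen D1 ∧ IsConnected D1 ∧
      D0 ⊆ D1 ∩ D ∧ ¬ (D1 ⊆ D) ∧
      ∀ f ∈ L2h D, ∃ F : E → ℂ, DifferentiableOn ℂ F D1 ∧ Set.EqOn F f D0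

/-- `w` is a regular boundary point of the domain `D ⊆ ℂ`. -/
def RegularBoundaryPt (D : Set ℂ) (w : ℂ) : Prop :=
  ∃ U : Set ℂ, IsOpen U ∧ w ∈ U ∧ ∃ u : ℂ → EReal, SubharmonicOn u (U ∩ D) ∧
    (∀ z ∈ U ∩ D, u z < 0) ∧ Tendsto u (𝓝[U ∩ D] w) (𝓝 (0 : EReal))

/-- The (pluricomplex) Green function of a domain `D ⊆ ℂ` with logarithmic pole at `p`. -/
noncomputable def greenFn (D : Set ℂ) (p z : ℂ) : EReal :=
  sSup {v : EReal | ∃ u : ℂ → EReal, SubharmonicOn u D ∧ (∀ x ∈ D, u x < 0) ∧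
    (∃ C : ℝ, ∀ᶠ x in 𝓝 p, u x ≤ ((Real.log ‖x - p‖ + C : ℝ) : EReal)) ∧ v = u z}

/-- A polydisc in `ℂⁿ` with centre `c` and multiradius `r`. -/
def polydisc {n : ℕ} (c : Fin n → ℂ) (r : Fin n → ℝ) : Set (Fin n → ℂ) :=
  {z | ∀ i, ‖z i - c i‖ < r i}

/-!
For a compact set `K ⊆ ℂ`, von Neumann's minimax theorem for the kernel `log⁺ (1 / |z - ξ|)` leaves
two possibilities: some probability measure on `K` has bounded logarithmic potential on `K`, or some
probability measure on `K` has infinite potential at every point of `K`. Both implications are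
settled by this alternative.

If `U \ D` is polar near `w ∈ ∂D`, the maximum principle excludes a bounded potential on
`K = closedBall w r \ D`. The infinite potential `p` makes `K` negligible for holomorphic functions:
multiplying `f ∈ L²ₕ(D)` by cut-offs `χ(p)` supported ever closer to `K`, Green's formula and
`∫ |∂ χ(p)|² → 0` show that `f` satisfies Cauchy's formula across `K`. Hence `f` extends past `w`.

Conversely, suppose that all of `L²ₕ(D)` extends past a boundary point `w` of a component `V` of
`D ∩ D₁`, and let `K` be the part of `∂V` in a small disc. If `μ` has bounded potential on `K`, the
Cauchy transforms of the measures `g μ`, `g ∈ L^∞(μ)`, are square integrable and therefore extend.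
By the uniform boundedness principle their derivatives can only stay bounded if
`∫ |ζ - ξ|⁻² dμ(ξ)` is finite at all `ζ ∈ K`, which contradicts the differentiation theorem for
measures. If some potential is infinite on `K`, then `K` has null projections to both axes, so it
does not separate a square around `w`; the complement of `D` near `w` is contained in `K`, and is
polar.
-/

/-! ### A minimax dichotomy for symmetric kernels -/

section Minimax

lemma lintegral_le_of_forall_lintegral_min_le {α : Type*} [MeasurableSpace α] {μ : Measure α}
    {f : α → ℝ≥0∞} (hf : Measurable f) {C : ℝ≥0∞} (h : ∀ N : ℕ, ∫⁻ x, min (f x) N ∂μ ≤ C) :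
    ∫⁻ x, f x ∂μ ≤ C := by
  have hsup : ∀ x, f x = ⨆ N : ℕ, min (f x) N := fun x => by
    rw [← inf_iSup_eq, ENNReal.iSup_natCast, inf_top_eq]
  rw [lintegral_congr hsup, lintegral_iSup (fun N => hf.min measurable_const)
    (fun m n hmn x => min_le_min_left _ (by exact_mod_cast hmn))]
  exact iSup_le h

lemma exists_isProbabilityMeasure_lintegral_eq_top {α β : Type*} [MeasurableSpace β]
    {k : α → β → ℝ≥0∞} (h : ∀ j : ℕ, ∃ ν : Measure β, IsProbabilityMeasure ν ∧
      ∀ x, ENNReal.ofReal (2 ^ (j + 1)) ≤ ∫⁻ y, k x y ∂ν) :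
    ∃ ν : Measure β, IsProbabilityMeasure ν ∧ ∀ x, ∫⁻ y, k x y ∂ν = ⊤ := by
  choose ν hν hle using h
  refine ⟨Measure.sum fun j => (2 : ℝ≥0∞)⁻¹ ^ (j + 1) • ν j, ⟨?_⟩, fun x => eq_top_iff.2 ?_⟩
  · rw [Measure.sum_apply _ MeasurableSet.univ]
    simp only [Measure.smul_apply, measure_univ, smul_eq_mul, mul_one,
      ENNReal.tsum_geometric_add_one, ENNReal.one_sub_inv_two, inv_inv]
    exact ENNReal.inv_mul_cancel two_ne_zero ENNReal.ofNat_ne_top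
  · rw [lintegral_sum_measure]
    calc (⊤ : ℝ≥0∞) = ∑' _ : ℕ, 1 := by simp
      _ ≤ _ := ENNReal.tsum_le_tsum fun j => ?_
    rw [lintegral_smul_measure, smul_eq_mul]
    calc (1 : ℝ≥0∞) = 2⁻¹ ^ (j + 1) * ENNReal.ofReal (2 ^ (j + 1)) := by
          rw [ENNReal.ofReal_pow zero_le_two, ← mul_pow, ENNReal.ofReal_ofNat,
            ENNReal.inv_mul_cancel two_ne_zero ENNReal.ofNat_ne_top, one_pow]
      _ ≤ _ := by gcongr; exact hle j x

variable {X : Type*} [TopologicalSpace X] [MeasurableSpace X]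

/-- The continuous functions lying uniformly strictly below the potential `x ↦ ∫ k x y dν(y)` of
some probability measure `ν`. The bound goes through `ENNReal.ofReal`, so it is void wherever the
function is sufficiently negative. -/
def strictSubpotentials (k : X → X → ℝ≥0∞) : Set C(X, ℝ) :=
  {f | ∃ ν : Measure X, IsProbabilityMeasure ν ∧
    ∃ ε > 0, ∀ x, ENNReal.ofReal (f x + ε) ≤ ∫⁻ y, k x y ∂ν}

lemma mem_strictSubpotentials_of_le_neg_one [Nonempty X] (k : X → X → ℝ≥0∞)
    {f : C(X, ℝ)} (hf : ∀ x, f x ≤ -1) : f ∈ strictSubpotentials k := by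
  obtain ⟨x₀⟩ := ‹Nonempty X›
  refine ⟨Measure.dirac x₀, inferInstance, 1, one_pos, fun x => ?_⟩
  rw [ENNReal.ofReal_of_nonpos (by linarith [hf x])]
  exact zero_le

lemma convex_strictSubpotentials (k : X → X → ℝ≥0∞) : Convex ℝ (strictSubpotentials k) := by
  rintro f ⟨ν, hν, ε, hε, hf⟩ g ⟨ν', hν', ε', hε', hg⟩ a b ha hb hab
  refine ⟨ENNReal.ofReal a • ν + ENNReal.ofReal b • ν', ⟨?_⟩, a * ε + b * ε', ?_, fun x => ?_⟩
  · simp [← ENNReal.ofReal_add ha hb, hab]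
  · rcases ha.eq_or_lt with rfl | ha
    · simpa [show b = 1 by linarith] using hε'
    · exact add_pos_of_pos_of_nonneg (mul_pos ha hε) (mul_nonneg hb (le_of_lt hε'))
  · calc ENNReal.ofReal ((a • f + b • g) x + (a * ε + b * ε'))
        = ENNReal.ofReal (a * (f x + ε) + b * (g x + ε')) := by
          congr 1
          simp only [ContinuousMap.add_apply, ContinuousMap.smul_apply, smul_eq_mul]
          ring
      _ ≤ ENNReal.ofReal (a * (f x + ε)) + ENNReal.ofReal (b * (g x + ε')) :=
          ENNReal.ofReal_add_le
      _ = ENNReal.ofReal a * ENNReal.ofReal (f x + ε)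
            + ENNReal.ofReal b * ENNReal.ofReal (g x + ε') := by
          rw [ENNReal.ofReal_mul ha, ENNReal.ofReal_mul hb]
      _ ≤ ENNReal.ofReal a * ∫⁻ y, k x y ∂ν + ENNReal.ofReal b * ∫⁻ y, k x y ∂ν' := by
          gcongr
          exacts [hf x, hg x]
      _ = ∫⁻ y, k x y ∂(ENNReal.ofReal a • ν + ENNReal.ofReal b • ν') := by
          simp [lintegral_add_measure, lintegral_smul_measure]

variable [CompactSpace X]

lemma isOpen_strictSubpotentials (k : X → X → ℝ≥0∞) : IsOpen (strictSubpotentials k) := by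
  rw [Metric.isOpen_iff]
  rintro f ⟨ν, hν, ε, hε, hf⟩
  refine ⟨ε / 2, half_pos hε, fun g hg =>
    ⟨ν, hν, ε / 2, half_pos hε, fun x => (ENNReal.ofReal_le_ofReal ?_).trans (hf x)⟩⟩
  have hdist := (ContinuousMap.dist_apply_le_dist (f := g) (g := f) x).trans_lt hg
  rw [Real.dist_eq, abs_lt] at hdist
  linarith

variable [T2Space X] [BorelSpace X]

lemma exists_measure_integral_eq_of_nonneg (Λ : C(X, ℝ) →L[ℝ] ℝ)
    (hΛ : ∀ f, 0 ≤ f → 0 ≤ Λ f) :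
    ∃ μ : Measure X, IsFiniteMeasure μ ∧ ∀ f : C(X, ℝ), ∫ x, f x ∂μ = Λ f := by
  let Λ' : CompactlySupportedContinuousMap X ℝ →ₚ[ℝ] ℝ := PositiveLinearMap.mk₀
    { toFun := fun f => Λ f.toContinuousMap
      map_add' := fun f g => by rw [← map_add]; rfl
      map_smul' := fun c f => by rw [RingHom.id_apply, ← map_smul]; rfl } fun _ hf => hΛ _ hf
  exact ⟨RealRMK.rieszMeasure Λ', inferInstance, fun f =>
    RealRMK.integral_rieszMeasure Λ' (CompactlySupportedContinuousMap.continuousMapEquiv f)⟩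

-- A set containing all sufficiently negative functions can only be separated from a constant by a
-- positive functional, which the Riesz theorem turns into a measure.
lemma exists_isProbabilityMeasure_forall_integral_lt {A : Set C(X, ℝ)} (hconv : Convex ℝ A)
    (hopen : IsOpen A) (hneg : ∀ f : C(X, ℝ), (∀ x, f x ≤ -1) → f ∈ A) {M : ℝ} (hM : 0 ≤ M)
    (hMA : ContinuousMap.const X M ∉ A) :
    ∃ μ : Measure X, IsProbabilityMeasure μ ∧ ∀ f ∈ A, ∫ x, f x ∂μ < M := by
  obtain ⟨Λ, hΛ⟩ := geometric_hahn_banach_open_point hconv hopen hMA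
  have hconst : ContinuousMap.const X M = M • (1 : C(X, ℝ)) := by ext; simp
  rw [hconst, map_smul, smul_eq_mul] at hΛ
  have hone : 0 < Λ 1 := by
    have := hΛ _ (hneg (-1) (by simp))
    rw [map_neg] at this
    nlinarith
  have hpos : ∀ f : C(X, ℝ), 0 ≤ f → 0 ≤ Λ f := by
    intro f hf
    by_contra! hcon
    obtain ⟨t, ht⟩ := exists_nat_gt ((M * Λ 1 + Λ 1) / (-Λ f))
    have hlt := hΛ _ (hneg (-1 - (t : ℝ) • f) fun x => by
      have : 0 ≤ f x := hf x
      simp only [ContinuousMap.sub_apply, ContinuousMap.neg_apply, ContinuousMap.one_apply,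
        ContinuousMap.smul_apply, smul_eq_mul, tsub_le_iff_right, le_add_iff_nonneg_right]
      positivity)
    rw [map_sub, map_neg, map_smul, smul_eq_mul] at hlt
    rw [div_lt_iff₀ (by linarith)] at ht
    nlinarith
  obtain ⟨μ, hμ, hint⟩ := exists_measure_integral_eq_of_nonneg Λ hpos
  have hmass : μ univ = ENNReal.ofReal (Λ 1) := by
    rw [← hint 1]
    simp
  have hmass_ne : μ univ ≠ 0 := by rw [hmass]; simpa using hone
  refine ⟨(μ univ)⁻¹ • μ, ⟨?_⟩, fun f hf => ?_⟩
  · rw [Measure.smul_apply, smul_eq_mul, ENNReal.inv_mul_cancel hmass_ne (measure_ne_top _ _)]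
  · rw [integral_smul_measure, hint, hmass, ENNReal.toReal_inv, ENNReal.toReal_ofReal hone.le,
      smul_eq_mul, inv_mul_lt_iff₀ hone, mul_comm]
    exact hΛ f hf

variable [Nonempty X] {k : X → X → ℝ≥0∞}

-- The Dirac mass at `x` has potential `k · x`, so by symmetry the truncations of `k x` lie in
-- `strictSubpotentials k` up to an additive constant.
lemma exists_lintegral_kernel_le_of_forall_exists_lt (hk : ∀ x, Continuous (k x))
    (hsymm : ∀ x y, k x y = k y x) {M : ℝ} (hM : 0 ≤ M)
    (hlt : ∀ ν : Measure X, IsProbabilityMeasure ν → ∃ x, ∫⁻ y, k x y ∂ν < ENNReal.ofReal M) :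
    ∃ μ : Measure X, IsProbabilityMeasure μ ∧ ∀ x, ∫⁻ y, k x y ∂μ ≤ ENNReal.ofReal (M + 1) := by
  have hMA : ContinuousMap.const X M ∉ strictSubpotentials k := by
    rintro ⟨ν, hν, ε, hε, hf⟩
    obtain ⟨x, hx⟩ := hlt ν hν
    refine absurd ((ENNReal.ofReal_le_ofReal ?_).trans (hf x)) (not_le.2 hx)
    simpa using le_of_lt hε
  obtain ⟨μ, hμ, hint⟩ := exists_isProbabilityMeasure_forall_integral_lt
    (convex_strictSubpotentials k) (isOpen_strictSubpotentials k)
    (fun f => mem_strictSubpotentials_of_le_neg_one k) hM hMA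
  refine ⟨μ, hμ, fun x => lintegral_le_of_forall_lintegral_min_le (hk x).measurable fun N => ?_⟩
  have hne : ∀ y, min (k x y) (N : ℝ≥0∞) ≠ ⊤ := fun y =>
    ne_top_of_le_ne_top (ENNReal.natCast_ne_top N) (min_le_right _ _)
  let f : C(X, ℝ) := ⟨fun y => (min (k x y) N).toReal,
    continuous_iff_continuousAt.2 fun y => (ENNReal.tendsto_toReal (hne y)).comp
      ((hk x).min continuous_const).continuousAt⟩
  have hf : ∀ y, ENNReal.ofReal (f y) = min (k x y) N := fun y => ENNReal.ofReal_toReal (hne y)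
  have hfi : Integrable f μ :=
    f.continuous.integrable_of_hasCompactSupport (HasCompactSupport.of_compactSpace _)
  have hfA : f - 1 ∈ strictSubpotentials k := by
    refine ⟨Measure.dirac x, inferInstance, 1, one_pos, fun y => ?_⟩
    rw [ContinuousMap.sub_apply, ContinuousMap.one_apply, sub_add_cancel, hf,
      lintegral_dirac' _ (hk y).measurable, hsymm y x]
    exact min_le_left _ _
  have hfM : ∫ y, f y ∂μ ≤ M + 1 := by
    have := hint _ hfA
    simp only [ContinuousMap.sub_apply, ContinuousMap.one_apply] at this
    rw [integral_sub hfi (integrable_const 1)] at this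
    simp only [integral_const, probReal_univ, smul_eq_mul, mul_one] at this
    linarith
  calc ∫⁻ y, min (k x y) N ∂μ = ∫⁻ y, ENNReal.ofReal (f y) ∂μ := by simp_rw [hf]
    _ = ENNReal.ofReal (∫ y, f y ∂μ) := (ofReal_integral_eq_lintegral_ofReal hfi
        (Eventually.of_forall fun y => ENNReal.toReal_nonneg)).symm
    _ ≤ ENNReal.ofReal (M + 1) := ENNReal.ofReal_le_ofReal hfM

lemma exists_lintegral_kernel_le_or_eq_top (hk : ∀ x, Continuous (k x))
    (hsymm : ∀ x y, k x y = k y x) :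
    (∃ μ : Measure X, IsProbabilityMeasure μ ∧
      ∃ C : ℝ, ∀ x, ∫⁻ y, k x y ∂μ ≤ ENNReal.ofReal C) ∨
    ∃ ν : Measure X, IsProbabilityMeasure ν ∧ ∀ x, ∫⁻ y, k x y ∂ν = ⊤ := by
  by_cases h : ∀ j : ℕ, ∃ ν : Measure X, IsProbabilityMeasure ν ∧
    ∀ x, ENNReal.ofReal (2 ^ (j + 1)) ≤ ∫⁻ y, k x y ∂ν
  · exact Or.inr (exists_isProbabilityMeasure_lintegral_eq_top h)
  · push Not at h
    obtain ⟨j, hj⟩ := h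
    obtain ⟨μ, hμ, hC⟩ :=
      exists_lintegral_kernel_le_of_forall_exists_lt hk hsymm (by positivity) hj
    exact Or.inl ⟨μ, hμ, _, hC⟩

end Minimax

/-! ### Logarithmic potentials -/

section LogPotential

/-- The logarithmic kernel `log⁺ (1 / |z|)`, with value `∞` at the origin. Truncating at `0` keeps
it in `[0, ∞]`; on sets of diameter at most `1` it is `-log |z|`. -/
noncomputable def logKernel (z : ℂ) : ℝ≥0∞ := (-(ENNReal.log ‖z‖ₑ)).toENNReal

lemma continuous_logKernel : Continuous logKernel :=
  (ENNReal.continuous_log.comp continuous_enorm).neg.ereal_toENNReal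

lemma logKernel_zero : logKernel 0 = ⊤ := by simp [logKernel]

lemma logKernel_of_ne_zero {z : ℂ} (hz : z ≠ 0) :
    logKernel z = ENNReal.ofReal (-Real.log ‖z‖) := by
  rw [logKernel, ← ofReal_norm, ENNReal.log_ofReal_of_pos (norm_pos_iff.2 hz), ← EReal.coe_neg,
    EReal.toENNReal_of_ne_top (EReal.coe_ne_top _), EReal.toReal_coe]

lemma logKernel_anti {z w : ℂ} (h : ‖z‖ ≤ ‖w‖) : logKernel w ≤ logKernel z :=
  EReal.toENNReal_le_toENNReal
    (EReal.neg_le_neg_iff.2 (ENNReal.log_monotone (enorm_le_iff_norm_le.2 h)))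

lemma logKernel_sub_comm (z w : ℂ) : logKernel (z - w) = logKernel (w - z) := by
  simp only [logKernel, ← ofReal_norm, norm_sub_rev]

lemma ofReal_neg_log_le_logKernel {z : ℂ} {η : ℝ} (h : ‖z‖ ≤ η) :
    ENNReal.ofReal (-Real.log η) ≤ logKernel z := by
  rcases eq_or_ne z 0 with rfl | hz
  · exact logKernel_zero ▸ le_top
  · rw [logKernel_of_ne_zero hz]
    exact ENNReal.ofReal_le_ofReal (neg_le_neg (Real.log_le_log (norm_pos_iff.2 hz) h))

lemma logKernel_le_ofReal_neg_log {z : ℂ} {η : ℝ} (hη : 0 < η) (h : η ≤ ‖z‖) :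
    logKernel z ≤ ENNReal.ofReal (-Real.log η) := by
  rw [logKernel_of_ne_zero (norm_pos_iff.1 (hη.trans_le h))]
  exact ENNReal.ofReal_le_ofReal (neg_le_neg (Real.log_le_log hη h))

lemma logKernel_le_add_log_two {a b : ℂ} (h : ‖b‖ ≤ 2 * ‖a‖) :
    logKernel a ≤ logKernel b + ENNReal.ofReal (Real.log 2) := by
  rcases eq_or_ne b 0 with rfl | hb
  · simp [logKernel_zero]
  have hb' := norm_pos_iff.2 hb
  have ha' : 0 < ‖a‖ := by linarith
  rw [logKernel_of_ne_zero hb, logKernel_of_ne_zero (norm_pos_iff.1 ha')]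
  refine (ENNReal.ofReal_le_ofReal ?_).trans ENNReal.ofReal_add_le
  have := Real.log_le_log hb' h
  rw [Real.log_mul two_ne_zero ha'.ne'] at this
  linarith

lemma measurable_logKernel_sub (z : ℂ) : Measurable fun ξ => logKernel (z - ξ) :=
  continuous_logKernel.measurable.comp (measurable_const.sub measurable_id)

/-- The logarithmic potential `z ↦ ∫ log⁺ (1 / |z - ξ|) dμ(ξ)` of a measure. -/
noncomputable def logPotential (μ : Measure ℂ) (z : ℂ) : ℝ≥0∞ := ∫⁻ ξ, logKernel (z - ξ) ∂μ

lemma exists_logPotential_le_or_eq_top {K : Set ℂ} (hK : IsCompact K) (hne : K.Nonempty) :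
    (∃ μ : Measure ℂ, IsProbabilityMeasure μ ∧ (∀ᵐ ξ ∂μ, ξ ∈ K) ∧
      ∃ C : ℝ, ∀ x ∈ K, logPotential μ x ≤ ENNReal.ofReal C) ∨
    ∃ ν : Measure ℂ, IsProbabilityMeasure ν ∧ (∀ᵐ ξ ∂ν, ξ ∈ K) ∧
      ∀ x ∈ K, logPotential ν x = ⊤ := by
  have := isCompact_iff_compactSpace.1 hK
  have := hne.to_subtype
  have hval : Measurable ((↑) : K → ℂ) := measurable_subtype_coe
  have hprob (μ : Measure K) [IsProbabilityMeasure μ] :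
      IsProbabilityMeasure (μ.map (↑) : Measure ℂ) :=
    Measure.isProbabilityMeasure_map hval.aemeasurable
  have hcarried (μ : Measure K) : ∀ᵐ ξ ∂(μ.map (↑) : Measure ℂ), ξ ∈ K :=
    (ae_map_iff hval.aemeasurable hK.measurableSet).2 (ae_of_all _ Subtype.property)
  have hpot (μ : Measure K) (z : ℂ) :
      logPotential (μ.map (↑)) z = ∫⁻ ξ : K, logKernel (z - ξ) ∂μ :=
    lintegral_map (measurable_logKernel_sub z) hval
  rcases exists_lintegral_kernel_le_or_eq_top (X := K) (k := fun x y => logKernel (x - y))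
    (fun x => continuous_logKernel.comp (by fun_prop)) (fun x y => logKernel_sub_comm x y)
    with ⟨μ, _, C, hC⟩ | ⟨ν, _, hν⟩
  · exact Or.inl ⟨_, hprob μ, hcarried μ, C, fun x hx => (hpot μ x).trans_le (hC ⟨x, hx⟩)⟩
  · exact Or.inr ⟨_, hprob ν, hcarried ν, fun x hx => (hpot ν x).trans (hν ⟨x, hx⟩)⟩

lemma lowerSemicontinuous_logPotential (μ : Measure ℂ) : LowerSemicontinuous (logPotential μ) := by
  intro z y hy
  by_contra hcon
  have hfr : ∃ᶠ x in 𝓝 z, logPotential μ x ≤ y :=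
    (not_eventually.1 hcon).mono fun x hx => not_lt.1 hx
  obtain ⟨s, hs, hs'⟩ := exists_seq_forall_of_frequently hfr
  have hfatou : logPotential μ z ≤ liminf (fun n => logPotential μ (s n)) atTop :=
    calc logPotential μ z = ∫⁻ ξ, liminf (fun n => logKernel (s n - ξ)) atTop ∂μ :=
          lintegral_congr fun ξ =>
            ((continuous_logKernel.tendsto _).comp (hs.sub_const ξ)).liminf_eq.symm
      _ ≤ _ := lintegral_liminf_le fun n => measurable_logKernel_sub (s n)
  have hle : liminf (fun n => logPotential μ (s n)) atTop ≤ y :=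
    (liminf_le_liminf (Eventually.of_forall hs')).trans (liminf_const y).le
  exact (hfatou.trans hle).not_gt hy

lemma measurable_logPotential (μ : Measure ℂ) : Measurable (logPotential μ) :=
  (lowerSemicontinuous_logPotential μ).measurable

variable {μ : Measure ℂ} [IsProbabilityMeasure μ]

lemma logPotential_le_of_le_norm_sub {z : ℂ} {η : ℝ} (hη : 0 < η)
    (h : ∀ᵐ ξ ∂μ, η ≤ ‖z - ξ‖) : logPotential μ z ≤ ENNReal.ofReal (-Real.log η) :=
  (lintegral_mono_ae (h.mono fun _ => logKernel_le_ofReal_neg_log hη)).trans (by simp)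

lemma le_logPotential_of_norm_sub_le {z : ℂ} {η : ℝ} (h : ∀ᵐ ξ ∂μ, ‖z - ξ‖ ≤ η) :
    ENNReal.ofReal (-Real.log η) ≤ logPotential μ z :=
  le_trans (by simp) (lintegral_mono_ae (h.mono fun _ => ofReal_neg_log_le_logKernel))

lemma exists_forall_le_norm_sub {K : Set ℂ} (hK : IsClosed K) {z : ℂ} (hz : z ∉ K) :
    ∃ η > 0, ∀ ξ ∈ K, η ≤ ‖z - ξ‖ := by
  obtain ⟨η, hη, h⟩ := Metric.isOpen_iff.1 hK.isOpen_compl z hz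
  refine ⟨η, hη, fun ξ hξ => ?_⟩
  by_contra! hlt
  exact h (by rwa [mem_ball, dist_comm, dist_eq_norm]) hξ

lemma logPotential_lt_top {K : Set ℂ} (hK : IsClosed K) (hμ : ∀ᵐ ξ ∂μ, ξ ∈ K) {z : ℂ}
    (hz : z ∉ K) : logPotential μ z < ⊤ := by
  obtain ⟨η, hη, h⟩ := exists_forall_le_norm_sub hK hz
  exact (logPotential_le_of_le_norm_sub hη (hμ.mono h)).trans_lt ENNReal.ofReal_lt_top

lemma logPotential_le_add_log_two {K : Set ℂ} (hK : IsCompact K) (hne : K.Nonempty)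
    (hμ : ∀ᵐ ξ ∂μ, ξ ∈ K) {C : ℝ} (hC : ∀ x ∈ K, logPotential μ x ≤ ENNReal.ofReal C) (z : ℂ) :
    logPotential μ z ≤ ENNReal.ofReal C + ENNReal.ofReal (Real.log 2) := by
  obtain ⟨x, hx, hxz⟩ := hK.exists_infDist_eq_dist hne z
  have hnearest : ∀ ξ ∈ K, ‖x - ξ‖ ≤ 2 * ‖z - ξ‖ := fun ξ hξ => by
    have h1 : dist z x ≤ dist z ξ := hxz ▸ infDist_le_dist_of_mem hξ
    rw [← dist_eq_norm, ← dist_eq_norm]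
    linarith [dist_triangle_left x ξ z]
  calc logPotential μ z ≤ ∫⁻ ξ, (logKernel (x - ξ) + ENNReal.ofReal (Real.log 2)) ∂μ :=
        lintegral_mono_ae (hμ.mono fun ξ hξ => logKernel_le_add_log_two (hnearest ξ hξ))
    _ = logPotential μ x + ENNReal.ofReal (Real.log 2) := by
        rw [lintegral_add_right _ measurable_const]; simp [logPotential]
    _ ≤ _ := by gcongr; exact hC x hx

end LogPotential

section CircleMeans

lemma log_add_posLog {r s : ℝ} (hr : 0 < r) (hs : 0 ≤ s) :
    Real.log r + Real.posLog (r⁻¹ * s) = Real.log (max r s) := by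
  rcases le_total s r with h | h
  · rw [max_eq_left h, (Real.posLog_eq_zero_iff _).2, add_zero]
    rw [abs_of_nonneg (by positivity)]
    exact inv_mul_le_one_of_le₀ h hr.le
  · rw [max_eq_right h, Real.posLog_eq_log, Real.log_mul (by positivity) (hr.trans_le h).ne',
      Real.log_inv, add_neg_cancel_left]
    rw [abs_of_nonneg (by positivity), ← div_eq_inv_mul]
    exact (one_le_div hr).2 h

lemma lintegral_circle_logKernel (c ξ : ℂ) {r : ℝ} (hr : 0 < r) (h : ‖c - ξ‖ + r ≤ 1) :
    ∫⁻ θ in Ioc 0 (2 * Real.pi), logKernel (circleMap c r θ - ξ) =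
      ENNReal.ofReal (2 * Real.pi) * ENNReal.ofReal (-Real.log (max r ‖c - ξ‖)) := by
  have hpi := Real.two_pi_pos
  have hmean : 2 * Real.pi * -Real.log (max r ‖c - ξ‖) =
      ∫ θ in Ioc 0 (2 * Real.pi), -Real.log ‖circleMap c r θ - ξ‖ := by
    rw [← log_add_posLog hr (norm_nonneg _),
      ← circleAverage_log_norm_sub_const_eq_log_radius_add_posLog hr.ne', Real.circleAverage_def,
      smul_eq_mul, ← mul_neg, mul_inv_cancel_left₀ hpi.ne',
      intervalIntegral.integral_of_le hpi.le, integral_neg]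
  rw [← ENNReal.ofReal_mul hpi.le, hmean, ofReal_integral_eq_lintegral_ofReal]
  · have hcount := ((countable_singleton ξ).preimage_circleMap c hr.ne').measure_zero volume
    refine lintegral_congr_ae (ae_restrict_of_ae ?_)
    filter_upwards [measure_eq_zero_iff_ae_notMem.1 hcount] with θ hθ
    exact logKernel_of_ne_zero (sub_ne_zero.2 hθ)
  · exact ((intervalIntegrable_iff_integrableOn_Ioc_of_le hpi.le).1
      (circleIntegrable_log_norm_sub_const (a := ξ) (c := c) r)).neg
  · refine Eventually.of_forall fun θ => neg_nonneg.2 (Real.log_nonpos (norm_nonneg _) ?_)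
    calc ‖circleMap c r θ - ξ‖ = ‖(c - ξ) + circleMap 0 r θ‖ := by
          congr 1; rw [circleMap_zero, circleMap]; ring
      _ ≤ ‖c - ξ‖ + ‖circleMap 0 r θ‖ := norm_add_le _ _
      _ ≤ 1 := by rwa [norm_circleMap_zero, abs_of_pos hr]

lemma lintegral_circle_logPotential (μ : Measure ℂ) [SFinite μ] (c : ℂ) (r : ℝ) :
    ∫⁻ θ in Ioc 0 (2 * Real.pi), logPotential μ (circleMap c r θ) =
      ∫⁻ ξ, (∫⁻ θ in Ioc 0 (2 * Real.pi), logKernel (circleMap c r θ - ξ)) ∂μ :=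
  lintegral_lintegral_swap (continuous_logKernel.comp
    (((continuous_circleMap c r).comp continuous_fst).sub continuous_snd)).measurable.aemeasurable

variable {μ : Measure ℂ} [SFinite μ]

lemma lintegral_circle_logPotential_le (c : ℂ) {r : ℝ} (hr : 0 < r)
    (h : ∀ᵐ ξ ∂μ, ‖c - ξ‖ + r ≤ 1) :
    ∫⁻ θ in Ioc 0 (2 * Real.pi), logPotential μ (circleMap c r θ) ≤
      ENNReal.ofReal (2 * Real.pi) * logPotential μ c := by
  rw [lintegral_circle_logPotential, logPotential,
    ← lintegral_const_mul _ (measurable_logKernel_sub c)]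
  refine lintegral_mono_ae (h.mono fun ξ hξ => ?_)
  rw [lintegral_circle_logKernel c ξ hr hξ]
  gcongr
  exact ofReal_neg_log_le_logKernel (le_max_right _ _)

lemma lintegral_circle_logPotential_eq (c : ℂ) {r : ℝ} (hr : 0 < r)
    (h : ∀ᵐ ξ ∂μ, ‖c - ξ‖ + r ≤ 1) (h' : ∀ᵐ ξ ∂μ, r ≤ ‖c - ξ‖) :
    ∫⁻ θ in Ioc 0 (2 * Real.pi), logPotential μ (circleMap c r θ) =
      ENNReal.ofReal (2 * Real.pi) * logPotential μ c := by
  rw [lintegral_circle_logPotential, logPotential,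
    ← lintegral_const_mul _ (measurable_logKernel_sub c)]
  refine lintegral_congr_ae ?_
  filter_upwards [h, h'] with ξ hξ hξ'
  rw [lintegral_circle_logKernel c ξ hr hξ, max_eq_right hξ',
    logKernel_of_ne_zero (norm_pos_iff.1 (hr.trans_le hξ'))]

lemma circleAvgTrunc_neg_coe_ennreal {g : ℂ → ℝ≥0∞} (hg : Measurable g) (c : ℂ) (R : ℝ) (n : ℕ) :
    circleAvgTrunc (fun z => -(g z : EReal)) c R n =
      -((2 * Real.pi)⁻¹ *
        (∫⁻ θ in Ioc 0 (2 * Real.pi), min (g (circleMap c R θ)) n).toReal) := by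
  have hn : ((n : ℝ) : EReal) = ((n : ℝ≥0∞) : EReal) := by simp; rfl
  have htrunc (x : ℝ≥0∞) :
      (max (-(x : EReal)) (-((n : ℝ) : EReal))).toReal = -(min x (n : ℝ≥0∞)).toReal := by
    rw [hn, EReal.max_neg_neg, EReal.toReal_neg_eq,
      ← EReal.coe_ennreal_strictMono.monotone.map_min, EReal.toReal_coe_ennreal]
  simp only [circleAvgTrunc, htrunc, ← circleMap.eq_1]
  rw [intervalIntegral.integral_of_le Real.two_pi_pos.le, integral_neg, integral_toReal, mul_neg]
  · exact ((hg.comp (measurable_circleMap c R)).min measurable_const).aemeasurable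
  · exact Eventually.of_forall fun θ =>
      (min_le_right _ _).trans_lt (ENNReal.natCast_lt_top n)

lemma subharmonicOn_neg_coe_ennreal {g : ℂ → ℝ≥0∞} (hg : LowerSemicontinuous g) {Ω : Set ℂ}
    (hmean : ∀ c ∈ Ω, ∀ R : ℝ, 0 < R → closedBall c R ⊆ Ω →
      ∫⁻ θ in Ioc 0 (2 * Real.pi), g (circleMap c R θ) ≤ ENNReal.ofReal (2 * Real.pi) * g c) :
    SubharmonicOn (fun z => -(g z : EReal)) Ω := by
  refine ⟨UpperSemicontinuous.upperSemicontinuousOn (fun z y hy => ?_) Ω, fun z _ => ?_,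
    fun c hc R hR hball => le_iInf fun n => ?_⟩
  · have hlsc : LowerSemicontinuous fun z => (g z : EReal) :=
      continuous_coe_ennreal_ereal.comp_lowerSemicontinuous hg EReal.coe_ennreal_strictMono.monotone
    filter_upwards [hlsc z _ (EReal.neg_lt_comm.1 hy)] with x hx
    exact EReal.neg_lt_comm.1 hx
  · exact (EReal.neg_le_zero.2 (EReal.coe_ennreal_nonneg _)).trans_lt EReal.zero_lt_top
  · rw [circleAvgTrunc_neg_coe_ennreal hg.measurable]
    by_cases htop : g c = ⊤
    · simp [htop]
    have hle : (∫⁻ θ in Ioc 0 (2 * Real.pi), min (g (circleMap c R θ)) n) ≤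
        ENNReal.ofReal (2 * Real.pi) * g c :=
      (lintegral_mono fun θ => min_le_left _ _).trans (hmean c hc R hR hball)
    have hle' := ENNReal.toReal_mono (ENNReal.mul_ne_top ENNReal.ofReal_ne_top htop) hle
    rw [ENNReal.toReal_mul, ENNReal.toReal_ofReal Real.two_pi_pos.le] at hle'
    simp only [← EReal.coe_ennreal_toReal htop]
    rw [← EReal.coe_neg, EReal.coe_le_coe_iff, neg_le_neg_iff,
      inv_mul_le_iff₀ Real.two_pi_pos]
    exact hle'

lemma subharmonicOn_neg_logPotential {w : ℂ} (hμ : ∀ᵐ ξ ∂μ, ξ ∈ closedBall w (1 / 4)) :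
    SubharmonicOn (fun z => -(logPotential μ z : EReal)) (ball w (1 / 4)) := by
  refine subharmonicOn_neg_coe_ennreal (lowerSemicontinuous_logPotential μ)
    fun c hc R hR hball => lintegral_circle_logPotential_le c hR (hμ.mono fun ξ hξ => ?_)
  have hR' : R < 1 / 2 := by
    have hplus : c + R ∈ ball w (1 / 4) := hball (by simp [abs_of_pos hR])
    have hc' := dist_triangle_right (c + R) c w
    rw [dist_self_add_left, Complex.norm_real, Real.norm_of_nonneg hR.le] at hc'
    linarith [mem_ball.1 hc, mem_ball.1 hplus]
  rw [← dist_eq_norm]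
  linarith [dist_triangle_right c ξ w, mem_ball.1 hc, mem_closedBall.1 hξ]

end CircleMeans

/-! ### Null projections of sets with infinite potential -/

section NullProjections

lemma lintegral_logKernel_real_lt_top : ∫⁻ s : ℝ, logKernel s < ⊤ := by
  have hint : IntegrableOn Real.log (Ioc (-1) 1) :=
    (intervalIntegrable_iff_integrableOn_Ioc_of_le (by norm_num)).1
      intervalIntegral.intervalIntegrable_log'
  refine lt_of_le_of_lt ?_ hint.neg.lintegral_lt_top
  rw [← lintegral_indicator measurableSet_Ioc]
  refine lintegral_mono_ae ?_
  filter_upwards [Measure.ae_ne volume (0 : ℝ)] with s hs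
  rw [logKernel_of_ne_zero (Complex.ofReal_ne_zero.2 hs), Complex.norm_real, Real.norm_eq_abs]
  by_cases hm : s ∈ Ioc (-1 : ℝ) 1
  · rw [indicator_of_mem hm, Real.log_abs, Pi.neg_apply]
  · have hs1 : 1 ≤ |s| := by
      by_contra! hlt
      exact hm ⟨(abs_lt.1 hlt).1, (abs_lt.1 hlt).2.le⟩
    rw [indicator_of_notMem hm, ENNReal.ofReal_of_nonpos (neg_nonpos.2 (Real.log_nonneg hs1))]

/-- A contraction `T` does not decrease the kernel, so the potential of the image of `ν` on the
line is infinite on `T '' K`, although it is locally integrable. -/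
lemma volume_image_eq_zero_of_logPotential_eq_top {K : Set ℂ} {ν : Measure ℂ} [IsFiniteMeasure ν]
    (hν : ∀ x ∈ K, logPotential ν x = ⊤) {T : ℂ → ℝ} (hT : LipschitzWith 1 T) :
    volume (T '' K) = 0 := by
  have hm : Measurable fun p : ℝ × ℂ => logKernel ((p.1 - T p.2 : ℝ) : ℂ) :=
    (continuous_logKernel.comp (Complex.continuous_ofReal.comp
      (continuous_fst.sub (hT.continuous.comp continuous_snd)))).measurable
  have hint : ∫⁻ s : ℝ, ∫⁻ ξ, logKernel ((s - T ξ : ℝ) : ℂ) ∂ν < ⊤ := by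
    have htrans (ξ : ℂ) : ∫⁻ s : ℝ, logKernel ((s - T ξ : ℝ) : ℂ) = ∫⁻ s : ℝ, logKernel s :=
      lintegral_sub_right_eq_self (fun s : ℝ => logKernel s) (T ξ)
    rw [lintegral_lintegral_swap hm.aemeasurable, lintegral_congr htrans, lintegral_const]
    exact ENNReal.mul_lt_top lintegral_logKernel_real_lt_top (measure_lt_top _ _)
  refine measure_mono_null ?_ (ae_iff.1 (ae_lt_top hm.lintegral_prod_right hint.ne))
  rintro _ ⟨x, hx, rfl⟩
  refine not_lt.2 ((hν x hx).symm.le.trans (lintegral_mono fun ξ => logKernel_anti ?_))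
  rw [Complex.norm_real, ← dist_eq_norm, ← dist_eq_norm]
  simpa using hT.dist_le_mul x ξ

lemma exists_mem_Ioo_notMem_of_volume_eq_zero {N : Set ℝ} (hN : volume N = 0) {a b : ℝ}
    (hab : a < b) : ∃ s ∈ Ioo a b, s ∉ N := by
  by_contra! hcon
  have := measure_mono_null hcon hN
  rw [Real.volume_Ioo, ENNReal.ofReal_eq_zero] at this
  linarith

lemma isPreconnected_reProdIm {I J : Set ℝ} (hI : IsPreconnected I) (hJ : IsPreconnected J) :
    IsPreconnected (I ×ℂ J) :=
  Complex.equivRealProdCLM.toHomeomorph.isPreconnected_preimage.2 (hI.prod hJ)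

lemma isPreconnected_cross {s t : ℝ} {I J : Set ℝ} (hI : IsPreconnected I)
    (hJ : IsPreconnected J) (hs : s ∈ I) (ht : t ∈ J) :
    IsPreconnected ({s} ×ℂ J ∪ I ×ℂ {t}) :=
  IsPreconnected.union ⟨s, t⟩ ⟨rfl, ht⟩ ⟨hs, rfl⟩
    (isPreconnected_reProdIm isPreconnected_singleton hJ)
    (isPreconnected_reProdIm hI isPreconnected_singleton)

/-- Two points are joined through the cross formed by a vertical and a horizontal line which both
avoid `K`. -/
lemma isPreconnected_reProdIm_diff {K : Set ℂ} (hre : volume (Complex.re '' K) = 0)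
    (him : volume (Complex.im '' K) = 0) (a b c d : ℝ) :
    IsPreconnected ((Ioo a b ×ℂ Ioo c d) \ K) := by
  set B := Ioo a b ×ℂ Ioo c d
  have hBo : IsOpen B := isOpen_Ioo.reProdIm isOpen_Ioo
  rintro W₁ W₂ h₁ h₂ hsub ⟨p, ⟨hpB, -⟩, hp⟩ ⟨q, ⟨hqB, -⟩, hq⟩
  obtain ⟨ε, hε, hpε⟩ := Metric.isOpen_iff.1 (hBo.inter h₁) p ⟨hpB, hp⟩
  obtain ⟨δ, hδ, hqδ⟩ := Metric.isOpen_iff.1 (hBo.inter h₂) q ⟨hqB, hq⟩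
  obtain ⟨s, hs, hsK⟩ := exists_mem_Ioo_notMem_of_volume_eq_zero hre
    (show p.re - ε < p.re + ε by linarith)
  obtain ⟨t, ht, htK⟩ := exists_mem_Ioo_notMem_of_volume_eq_zero him
    (show q.im - δ < q.im + δ by linarith)
  rw [← Real.ball_eq_Ioo, mem_ball] at hs ht
  have hp' : (⟨s, p.im⟩ : ℂ) ∈ B ∩ W₁ := hpε (by rwa [mem_ball, Complex.dist_of_im_eq (by rfl)])
  have hq' : (⟨q.re, t⟩ : ℂ) ∈ B ∩ W₂ := hqδ (by rwa [mem_ball, Complex.dist_of_re_eq (by rfl)])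
  have hs' : s ∈ Ioo a b := hp'.1.1
  have ht' : t ∈ Ioo c d := hq'.1.2
  have hcross : {s} ×ℂ Ioo c d ∪ Ioo a b ×ℂ {t} ⊆ B \ K := by
    rintro x (⟨rfl, hx⟩ | ⟨hx, rfl⟩)
    · exact ⟨⟨hs', hx⟩, fun hxK => hsK ⟨x, hxK, rfl⟩⟩
    · exact ⟨⟨hx, ht'⟩, fun hxK => htK ⟨x, hxK, rfl⟩⟩
  obtain ⟨x, hx, hx'⟩ := isPreconnected_cross isPreconnected_Ioo isPreconnected_Ioo hs' ht'
    W₁ W₂ h₁ h₂ (hcross.trans hsub) ⟨_, Or.inl ⟨rfl, hp'.1.2⟩, hp'.2⟩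
    ⟨_, Or.inr ⟨hq'.1.1, rfl⟩, hq'.2⟩
  exact ⟨x, hcross hx, hx'⟩

end NullProjections

/-! ### Derivatives of potentials -/

section Derivatives

/-- The real-linear functional `h ↦ Re (a h)`, depending linearly on `a`. The differential of the
real part of a holomorphic function `f` is `reMulCLM (f' z)`. -/
noncomputable def reMulCLM : ℂ →L[ℝ] ℂ →L[ℝ] ℝ :=
  (ContinuousLinearMap.compL ℝ ℂ ℂ ℝ Complex.reCLM).comp (ContinuousLinearMap.mul ℝ ℂ)

lemma reMulCLM_apply (a h : ℂ) : reMulCLM a h = (a * h).re := rfl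

lemma norm_reMulCLM_le (a : ℂ) : ‖reMulCLM a‖ ≤ ‖a‖ :=
  ContinuousLinearMap.opNorm_le_bound _ (norm_nonneg _) fun h => by
    rw [reMulCLM_apply, ← norm_mul]
    exact Complex.abs_re_le_norm _

lemma hasFDerivAt_log_norm {v : ℂ} (hv : v ≠ 0) :
    HasFDerivAt (fun z : ℂ => Real.log ‖z‖) (reMulCLM v⁻¹) v := by
  have hsq : HasFDerivAt (fun z : ℂ => ‖z‖ ^ 2) (2 • innerSL ℝ v) v :=
    (hasStrictFDerivAt_norm_sq v).hasFDerivAt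
  have hlog : (fun z : ℂ => Real.log ‖z‖) = fun z => (1 / 2 : ℝ) * Real.log (‖z‖ ^ 2) := by
    ext z; rw [Real.log_pow]; push_cast; ring
  rw [hlog]
  refine ((hsq.log (by positivity)).const_mul (1 / 2 : ℝ)).congr_fderiv ?_
  ext h
  rw [reMulCLM_apply, Complex.mul_re, Complex.inv_re, Complex.inv_im, Complex.normSq_eq_norm_sq]
  simp only [smul_apply, innerSL_apply_apply, Complex.inner, Complex.mul_re,
    Complex.conj_re, Complex.conj_im, smul_eq_mul, nsmul_eq_mul, Nat.cast_ofNat]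
  ring

lemma half_le_norm_sub {z₀ z ξ : ℂ} {η : ℝ} (hη : η ≤ ‖z₀ - ξ‖) (hz : z ∈ ball z₀ (η / 2)) :
    η / 2 ≤ ‖z - ξ‖ := by
  rw [mem_ball_iff_norm'] at hz
  linarith [norm_sub_le_norm_sub_add_norm_sub z₀ z ξ]

lemma norm_inv_sub_le {z₀ z ξ : ℂ} {η : ℝ} (hη₀ : 0 < η) (hη : η ≤ ‖z₀ - ξ‖)
    (hz : z ∈ ball z₀ (η / 2)) : ‖(z - ξ)⁻¹‖ ≤ (η / 2)⁻¹ := by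
  rw [norm_inv]
  exact inv_anti₀ (half_pos hη₀) (half_le_norm_sub hη hz)

lemma sub_ne_zero_of_mem_ball_half {z₀ z ξ : ℂ} {η : ℝ} (hη₀ : 0 < η) (hη : η ≤ ‖z₀ - ξ‖)
    (hz : z ∈ ball z₀ (η / 2)) : z - ξ ≠ 0 :=
  norm_pos_iff.1 ((half_pos hη₀).trans_le (half_le_norm_sub hη hz))

variable {μ : Measure ℂ}

/-- The Cauchy transform `z ↦ ∫ g(ξ) / (z - ξ) dμ(ξ)` of the measure with density `g` with respect
to `μ`. -/
noncomputable def cauchyTransform (μ : Measure ℂ) (g : ℂ → ℂ) (z : ℂ) : ℂ :=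
  ∫ ξ, g ξ * (z - ξ)⁻¹ ∂μ

lemma hasDerivAt_cauchyTransform {g : ℂ → ℂ} (hg : Integrable g μ) {z₀ : ℂ} {η : ℝ} (hη₀ : 0 < η)
    (hη : ∀ᵐ ξ ∂μ, η ≤ ‖z₀ - ξ‖) :
    HasDerivAt (cauchyTransform μ g) (∫ ξ, g ξ * -(z₀ - ξ)⁻¹ ^ 2 ∂μ) z₀ := by
  have hz₀ : z₀ ∈ ball z₀ (η / 2) := mem_ball_self (half_pos hη₀)
  have hm (z : ℂ) : AEStronglyMeasurable (fun ξ => (z - ξ)⁻¹) μ := by fun_prop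
  refine (hasDerivAt_integral_of_dominated_loc_of_deriv_le (F := fun z ξ => g ξ * (z - ξ)⁻¹)
    (F' := fun z ξ => g ξ * -(z - ξ)⁻¹ ^ 2) (bound := fun ξ => ‖g ξ‖ * (η / 2)⁻¹ ^ 2)
    (ball_mem_nhds z₀ (half_pos hη₀)) ?_ ?_ ?_ ?_ ?_ ?_).2
  · exact Eventually.of_forall fun z => hg.aestronglyMeasurable.mul (hm z)
  · exact hg.mul_bdd (hm z₀) (hη.mono fun ξ hξ => norm_inv_sub_le hη₀ hξ hz₀)
  · exact hg.aestronglyMeasurable.mul ((hm z₀).pow 2).neg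
  · refine hη.mono fun ξ hξ z hz => ?_
    rw [norm_mul, norm_neg, norm_pow]
    gcongr
    exact norm_inv_sub_le hη₀ hξ hz
  · exact hg.norm.mul_const _
  · refine hη.mono fun ξ hξ z hz => ?_
    refine (((hasDerivAt_id z).sub_const ξ).inv
      (sub_ne_zero_of_mem_ball_half hη₀ hξ hz)).const_mul (g ξ) |>.congr_deriv ?_
    rw [neg_div, one_div, inv_pow, id_eq]

lemma differentiableOn_cauchyTransform {K : Set ℂ} (hK : IsClosed K) (hμ : ∀ᵐ ξ ∂μ, ξ ∈ K)
    {g : ℂ → ℂ} (hg : Integrable g μ) : DifferentiableOn ℂ (cauchyTransform μ g) Kᶜ := by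
  intro z hz
  obtain ⟨η, hη, h⟩ := exists_forall_le_norm_sub hK hz
  exact (hasDerivAt_cauchyTransform hg hη (hμ.mono h)).differentiableAt.differentiableWithinAt

lemma toReal_logPotential {z : ℂ} (hne : ∀ᵐ ξ ∂μ, z ≠ ξ) (hle : ∀ᵐ ξ ∂μ, ‖z - ξ‖ ≤ 1) :
    (logPotential μ z).toReal = -∫ ξ, Real.log ‖z - ξ‖ ∂μ := by
  have hm : Measurable fun ξ => Real.log ‖z - ξ‖ := by fun_prop
  rw [← integral_neg, integral_eq_lintegral_of_nonneg_ae]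
  · exact congrArg ENNReal.toReal (lintegral_congr_ae
      (hne.mono fun ξ hξ => logKernel_of_ne_zero (sub_ne_zero.2 hξ)))
  · exact hle.mono fun ξ hξ => neg_nonneg.2 (Real.log_nonpos (norm_nonneg _) hξ)
  · exact hm.neg.aestronglyMeasurable

variable [IsFiniteMeasure μ]

lemma hasFDerivAt_integral_log_norm_sub {R : ℝ} (hR : ∀ᵐ ξ ∂μ, ‖ξ‖ ≤ R) {z₀ : ℂ} {η : ℝ}
    (hη₀ : 0 < η) (hη : ∀ᵐ ξ ∂μ, η ≤ ‖z₀ - ξ‖) :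
    HasFDerivAt (fun z => ∫ ξ, Real.log ‖z - ξ‖ ∂μ) (reMulCLM (cauchyTransform μ 1 z₀)) z₀ := by
  have hz₀ : z₀ ∈ ball z₀ (η / 2) := mem_ball_self (half_pos hη₀)
  have hint : Integrable (fun ξ => (z₀ - ξ)⁻¹) μ :=
    Integrable.of_bound (by fun_prop) _ (hη.mono fun ξ hξ => norm_inv_sub_le hη₀ hξ hz₀)
  simp only [cauchyTransform, Pi.one_apply, one_mul]
  rw [← ContinuousLinearMap.integral_comp_comm _ hint]
  have hm (z : ℂ) : AEStronglyMeasurable (fun ξ => Real.log ‖z - ξ‖) μ :=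
    (show Measurable fun ξ => Real.log ‖z - ξ‖ by fun_prop).aestronglyMeasurable
  refine hasFDerivAt_integral_of_dominated_of_fderiv_le (F := fun z ξ => Real.log ‖z - ξ‖)
    (F' := fun z ξ => reMulCLM (z - ξ)⁻¹) (bound := fun _ => (η / 2)⁻¹)
    (ball_mem_nhds z₀ (half_pos hη₀)) (Eventually.of_forall hm) ?_
    (reMulCLM.continuous.comp_aestronglyMeasurable hint.aestronglyMeasurable)
    (hη.mono fun ξ hξ z hz => (norm_reMulCLM_le _).trans (norm_inv_sub_le hη₀ hξ hz))
    (integrable_const _) (hη.mono fun ξ hξ z hz => ?_)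
  · refine Integrable.of_bound (hm z₀) (max |Real.log η| |Real.log (‖z₀‖ + R)|) ?_
    filter_upwards [hR, hη] with ξ hξR hξη
    exact abs_le_max_abs_abs (Real.log_le_log hη₀ hξη) (Real.log_le_log (hη₀.trans_le hξη)
      ((norm_sub_le _ _).trans (by gcongr)))
  · simpa using! (hasFDerivAt_log_norm (sub_ne_zero_of_mem_ball_half hη₀ hξ hz)).comp z
      ((hasFDerivAt_id z).sub_const ξ)

lemma hasFDerivAt_toReal_logPotential {K : Set ℂ} (hK : IsCompact K) (hμ : ∀ᵐ ξ ∂μ, ξ ∈ K) {z : ℂ}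
    (hz : z ∉ K) (hle : ∀ ξ ∈ K, ‖z - ξ‖ < 1) :
    HasFDerivAt (fun z => (logPotential μ z).toReal) (-reMulCLM (cauchyTransform μ 1 z)) z := by
  obtain ⟨η, hη, hη'⟩ := exists_forall_le_norm_sub hK.isClosed hz
  obtain ⟨R, hR⟩ := hK.isBounded.exists_norm_le
  refine (hasFDerivAt_integral_log_norm_sub (hμ.mono hR) hη
    (hμ.mono hη')).neg.congr_of_eventuallyEq ?_
  have hnear : ∀ᶠ y in 𝓝 z, ∀ ξ ∈ K, ‖y - ξ‖ < 1 :=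
    hK.eventually_forall_of_forall_eventually fun ξ hξ =>
      ContinuousAt.eventually_lt (by fun_prop) (by fun_prop) (hle ξ hξ)
  filter_upwards [hK.isClosed.isOpen_compl.mem_nhds hz, hnear] with y hy hy'
  exact toReal_logPotential (hμ.mono fun ξ hξ h => hy (h ▸ hξ)) (hμ.mono fun ξ hξ => (hy' ξ hξ).le)

end Derivatives

/-! ### Truncations of subharmonic functions -/

section Truncation

/-- The truncation of an extended-real function from below at level `-n`, as a real function;
`circleAvgTrunc` is its circle average. -/
noncomputable def truncBelow (u : ℂ → EReal) (n : ℕ) (z : ℂ) : ℝ :=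
  (max (u z) (-(n : ℝ) : EReal)).toReal

variable {u : ℂ → EReal} {Ω : Set ℂ} {z : ℂ}

lemma coe_truncBelow (h : u z < ⊤) (n : ℕ) :
    (truncBelow u n z : EReal) = max (u z) ((-(n : ℝ) : ℝ) : EReal) := by
  rw [truncBelow, ← EReal.coe_neg]
  exact EReal.coe_toReal (max_lt h (EReal.coe_lt_top _)).ne
    ((EReal.bot_lt_coe _).trans_le (le_max_right _ _)).ne'

lemma truncBelow_of_eq_bot (h : u z = ⊥) (n : ℕ) : truncBelow u n z = -n := by
  rw [truncBelow, h, max_eq_right bot_le, ← EReal.coe_neg, EReal.toReal_coe]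

lemma neg_le_truncBelow (h : u z < ⊤) (n : ℕ) : -(n : ℝ) ≤ truncBelow u n z := by
  rw [← EReal.coe_le_coe_iff, coe_truncBelow h]
  exact le_max_right _ _

lemma toReal_le_truncBelow (h : u z < ⊤) (h' : u z ≠ ⊥) (n : ℕ) :
    (u z).toReal ≤ truncBelow u n z := by
  rw [← EReal.coe_le_coe_iff, coe_truncBelow h, EReal.coe_toReal h.ne h']
  exact le_max_left _ _

lemma truncBelow_le_truncBelow_zero (h : u z < ⊤) (n : ℕ) :
    truncBelow u n z ≤ truncBelow u 0 z := by
  rw [← EReal.coe_le_coe_iff, coe_truncBelow h, coe_truncBelow h]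
  exact max_le_max le_rfl (by simp [-EReal.coe_neg])

namespace SubharmonicOn

variable {c : ℂ} {R : ℝ}

lemma upperSemicontinuousOn_truncBelow (hu : SubharmonicOn u Ω) (n : ℕ) :
    UpperSemicontinuousOn (truncBelow u n) Ω := by
  intro x hx y hy
  have hlt : max (u x) ((-(n : ℝ) : ℝ) : EReal) < y := by
    rwa [← coe_truncBelow (hu.2.1 x hx), EReal.coe_lt_coe_iff]
  filter_upwards [hu.1 x hx y (max_lt_iff.1 hlt).1, self_mem_nhdsWithin] with z hz hzΩ
  rw [← EReal.coe_lt_coe_iff, coe_truncBelow (hu.2.1 z hzΩ)]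
  exact max_lt hz (max_lt_iff.1 hlt).2

lemma exists_truncBelow_le (hu : SubharmonicOn u Ω) {L : Set ℂ} (hL : IsCompact L)
    (hLΩ : L ⊆ Ω) : ∃ B : ℝ, ∀ n, ∀ z ∈ L, truncBelow u n z ≤ B := by
  rcases L.eq_empty_or_nonempty with rfl | h
  · exact ⟨0, by simp⟩
  · obtain ⟨a, -, hmax⟩ :=
      UpperSemicontinuousOn.exists_isMaxOn h hL ((hu.upperSemicontinuousOn_truncBelow 0).mono hLΩ)
    exact ⟨_, fun n z hz => (truncBelow_le_truncBelow_zero (hu.2.1 z (hLΩ hz)) n).trans (hmax hz)⟩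

lemma circleIntegrable_truncBelow (hu : SubharmonicOn u Ω) (hR : 0 ≤ R)
    (hc : closedBall c R ⊆ Ω) (n : ℕ) : CircleIntegrable (truncBelow u n) c R := by
  have hm (θ : ℝ) : circleMap c R θ ∈ closedBall c R := circleMap_mem_closedBall c hR θ
  obtain ⟨B, hB⟩ := hu.exists_truncBelow_le (isCompact_closedBall c R) hc
  have husc : UpperSemicontinuous fun θ => truncBelow u n (circleMap c R θ) := fun θ y hy =>
    (tendsto_nhdsWithin_iff.2 ⟨(continuous_circleMap c R).continuousAt,
      Eventually.of_forall fun t => hc (hm t)⟩).eventually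
      (hu.upperSemicontinuousOn_truncBelow n (circleMap c R θ) (hc (hm θ)) y hy)
  rw [CircleIntegrable, intervalIntegrable_iff_integrableOn_Ioc_of_le Real.two_pi_pos.le]
  refine Integrable.of_bound husc.measurable.aestronglyMeasurable (max B n)
    (Eventually.of_forall fun θ => ?_)
  rw [Real.norm_eq_abs, abs_le]
  exact ⟨(neg_le_neg (le_max_right _ _)).trans (neg_le_truncBelow (hu.2.1 _ (hc (hm θ))) n),
    (hB n _ (hm θ)).trans (le_max_left _ _)⟩

lemma le_circleAverage_truncBelow (hu : SubharmonicOn u Ω) (hR : 0 < R)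
    (hc : closedBall c R ⊆ Ω) (n : ℕ) : u c ≤ Real.circleAverage (truncBelow u n) c R :=
  (hu.2.2 c (hc (mem_closedBall_self hR.le)) R hR hc).trans (iInf_le _ n)

lemma truncBelow_le_circleAverage (hu : SubharmonicOn u Ω) (hR : 0 < R)
    (hc : closedBall c R ⊆ Ω) (n : ℕ) :
    truncBelow u n c ≤ Real.circleAverage (truncBelow u n) c R := by
  rw [← EReal.coe_le_coe_iff, coe_truncBelow (hu.2.1 _ (hc (mem_closedBall_self hR.le)))]
  refine max_le (hu.le_circleAverage_truncBelow hR hc n) (EReal.coe_le_coe_iff.2 ?_)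
  rw [← Real.circleAverage_const (-(n : ℝ)) c R]
  refine Real.circleAverage_mono (circleIntegrable_const _ c R)
    (hu.circleIntegrable_truncBelow hR.le hc n) fun x hx => ?_
  rw [abs_of_pos hR] at hx
  exact neg_le_truncBelow (hu.2.1 _ (hc (sphere_subset_closedBall hx))) n

end SubharmonicOn

lemma circleIntegrable_indicator_one {O : Set ℂ} (hO : IsOpen O) (c : ℂ) (R : ℝ) :
    CircleIntegrable (O.indicator (1 : ℂ → ℝ)) c R := by
  rw [CircleIntegrable, intervalIntegrable_iff_integrableOn_Ioc_of_le Real.two_pi_pos.le]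
  exact (integrable_const (1 : ℝ)).indicator (hO.measurableSet.preimage (measurable_circleMap c R))

lemma circleAverage_indicator_one_pos {O : Set ℂ} (hO : IsOpen O) {c : ℂ} {R : ℝ}
    {g : ℂ} (hgO : g ∈ O) (hg : g ∈ sphere c |R|) :
    0 < Real.circleAverage (O.indicator (1 : ℂ → ℝ)) c R := by
  have hS : IsOpen (circleMap c R ⁻¹' O) := hO.preimage (continuous_circleMap c R)
  have harc : (Ioo 0 (2 * Real.pi) ∩ circleMap c R ⁻¹' O).Nonempty := by
    rw [← image_circleMap_Ioc] at hg
    obtain ⟨θ, hθ, rfl⟩ := hg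
    refine inter_comm _ _ ▸ mem_closure_iff.1 ?_ _ hS hgO
    rw [closure_Ioo Real.two_pi_pos.ne]
    exact Ioc_subset_Icc_self hθ
  refine mul_pos (inv_pos.2 Real.two_pi_pos)
    ((intervalIntegral.integral_pos_iff_support_of_nonneg_ae
      (Eventually.of_forall fun θ => indicator_nonneg (by simp) _)
      (circleIntegrable_indicator_one hO c R)).2 ⟨Real.two_pi_pos, ?_⟩)
  refine ((isOpen_Ioo.inter hS).measure_pos volume harc).trans_le (measure_mono ?_)
  rintro θ ⟨hθ, hθO⟩
  exact ⟨by simp [indicator_of_mem (show circleMap c R θ ∈ O from hθO)],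
    Ioo_subset_Ioc_self hθ⟩

namespace SubharmonicOn

/-- The truncated averages are at most `B - n t`, where `t` is the proportion of the circle
inside `O`. -/
lemma eq_bot_of_eq_bot_on_circle (hu : SubharmonicOn u Ω) {c : ℂ} {R : ℝ} (hR : 0 < R)
    (hc : closedBall c R ⊆ Ω) {O : Set ℂ} (hO : IsOpen O) (hbot : ∀ z ∈ O, u z = ⊥) {g : ℂ}
    (hgO : g ∈ O) (hg : g ∈ sphere c R) : u c = ⊥ := by
  obtain ⟨B, hB⟩ := hu.exists_truncBelow_le (isCompact_closedBall c R) hc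
  set χ : ℂ → ℝ := O.indicator 1
  have hχ : CircleIntegrable χ c R := circleIntegrable_indicator_one hO c R
  have ht : 0 < Real.circleAverage χ c R :=
    circleAverage_indicator_one_pos hO hgO ((abs_of_pos hR).symm ▸ hg)
  set t := Real.circleAverage χ c R
  have hB0 := (truncBelow_of_eq_bot (hbot g hgO) 0).symm.trans_le
    (hB 0 g (sphere_subset_closedBall hg))
  have hle (n : ℕ) : Real.circleAverage (truncBelow u n) c R ≤ B - n * t := by
    have hBi := circleIntegrable_const B c R
    have hnχ : CircleIntegrable ((n : ℝ) • χ) c R := hχ.const_smul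
    calc _ ≤ Real.circleAverage ((fun _ => B) - (n : ℝ) • χ) c R := by
          refine Real.circleAverage_mono (hu.circleIntegrable_truncBelow hR.le hc n)
            (hBi.sub hnχ) fun z hz => ?_
          rw [abs_of_pos hR] at hz
          by_cases hzO : z ∈ O
          · simpa [χ, hzO, truncBelow_of_eq_bot (hbot z hzO)] using hB0
          · simpa [χ, hzO] using hB n z (sphere_subset_closedBall hz)
      _ = B - n * t := by
          rw [Real.circleAverage_sub hBi hnχ, Real.circleAverage_const, Real.circleAverage_smul,
            smul_eq_mul]
  by_contra hne
  obtain ⟨n, hn⟩ := exists_nat_gt ((B - (u c).toReal) / t)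
  have hcn := (hu.le_circleAverage_truncBelow hR hc n).trans (EReal.coe_le_coe_iff.2 (hle n))
  rw [← EReal.coe_toReal (hu.2.1 _ (hc (mem_closedBall_self hR.le))).ne hne,
    EReal.coe_le_coe_iff] at hcn
  rw [div_lt_iff₀ ht] at hn
  linarith

lemma exists_ne_bot (hu : SubharmonicOn u Ω) (hΩ : IsOpen Ω) (hconn : IsConnected Ω)
    (hne : ∃ x ∈ Ω, u x ≠ ⊥) {w : ℂ} (hw : w ∈ Ω) {V : Set ℂ} (hV : V ∈ 𝓝 w) :
    ∃ z ∈ V, u z ≠ ⊥ := by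
  by_contra! hcon
  set S : Set ℂ := interior {x | u x = ⊥}
  have hS : ∀ z ∈ S, u z = ⊥ := fun _ hz => interior_subset (s := {x | u x = ⊥}) hz
  have hclosed : closure S ∩ Ω ⊆ S := by
    rintro x ⟨hxS, hxΩ⟩
    obtain ⟨ε, hε, hball⟩ := Metric.isOpen_iff.1 hΩ x hxΩ
    obtain ⟨g, hgS, hg⟩ := Metric.mem_closure_iff.1 hxS (ε / 4) (by positivity)
    refine mem_interior.2 ⟨ball x (ε / 4), fun y hy => ?_, isOpen_ball,
      mem_ball_self (by positivity)⟩
    rw [mem_ball] at hy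
    by_cases hyg : g = y
    · exact hyg ▸ hS g hgS
    · refine hu.eq_bot_of_eq_bot_on_circle (dist_pos.2 hyg) (fun t ht => hball ?_)
        isOpen_interior hS hgS rfl
      rw [mem_closedBall] at ht
      rw [mem_ball]
      linarith [dist_triangle t y x, dist_triangle g x y, dist_comm g x, dist_comm x y]
  obtain ⟨x, hx, hxu⟩ := hne
  exact hxu (hS x (hconn.isPreconnected.subset_of_closure_inter_subset isOpen_interior
    ⟨w, hw, mem_interior_iff_mem_nhds.2 (mem_of_superset hV hcon)⟩ hclosed hx))

end SubharmonicOn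

end Truncation

/-! ### Polar sets carry no bounded potential -/

section MaximumPrinciple

lemma le_of_lt_circleAverage {h : ℂ → ℝ} {L : Set ℂ} (hL : IsCompact L)
    (hh : UpperSemicontinuousOn h L) {m : ℝ}
    (H : ∀ p ∈ L, h p ≤ m ∨ ∃ r, sphere p |r| ⊆ L ∧ CircleIntegrable h p r ∧
      h p < Real.circleAverage h p r) {z : ℂ} (hz : z ∈ L) : h z ≤ m := by
  obtain ⟨p, hp, hmax⟩ := hh.exists_isMaxOn ⟨z, hz⟩ hL
  rcases H p hp with hle | ⟨r, hr, hint, hlt⟩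
  · exact (hmax hz).trans hle
  · exact absurd (Real.circleAverage_mono_on_of_le_circle hint fun x hx => hmax (hr hx)) hlt.not_ge

lemma circleAverage_norm_sub_sq (p w : ℂ) (r : ℝ) :
    Real.circleAverage (fun z => ‖z - w‖ ^ 2) p r = ‖p - w‖ ^ 2 + r ^ 2 := by
  have hexpand (θ : ℝ) : ‖circleMap p r θ - w‖ ^ 2 = (‖p - w‖ ^ 2 + r ^ 2) +
      (2 * r * (p - w).re * Real.cos θ + 2 * r * (p - w).im * Real.sin θ) := by
    simp only [← Complex.normSq_eq_norm_sq, Complex.normSq_apply, Complex.sub_re, Complex.sub_im,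
      circleMap, Complex.add_re, Complex.add_im, Complex.re_ofReal_mul, Complex.im_ofReal_mul,
      Complex.exp_ofReal_mul_I_re, Complex.exp_ofReal_mul_I_im]
    linear_combination r ^ 2 * Real.sin_sq_add_cos_sq θ
  have hcont : Continuous fun θ =>
      2 * r * (p - w).re * Real.cos θ + 2 * r * (p - w).im * Real.sin θ := by fun_prop
  simp only [Real.circleAverage, hexpand]
  rw [intervalIntegral.integral_add intervalIntegrable_const (hcont.intervalIntegrable _ _),
    intervalIntegral.integral_add (Continuous.intervalIntegrable (by fun_prop) _ _)
      (Continuous.intervalIntegrable (by fun_prop) _ _)]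
  simp
  field_simp

lemma upperSemicontinuousOn_piecewise {K L : Set ℂ} [DecidablePred (· ∈ K)]
    {f : ℂ → ℝ} {M : ℝ} (hK : IsClosed K) (hf : ContinuousOn f (L \ K))
    (hM : ∀ z ∈ L \ K, f z ≤ M) : UpperSemicontinuousOn (K.piecewise (fun _ => M) f) L := by
  intro x hx y hy
  by_cases hxK : x ∈ K
  · rw [piecewise_eq_of_mem _ _ _ hxK] at hy
    filter_upwards [self_mem_nhdsWithin] with z hz
    by_cases hzK : z ∈ K
    · rwa [piecewise_eq_of_mem _ _ _ hzK]
    · rw [piecewise_eq_of_notMem _ _ _ hzK]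
      exact (hM z ⟨hz, hzK⟩).trans_lt hy
  · rw [piecewise_eq_of_notMem _ _ _ hxK] at hy
    have hnhds : L \ K ∈ 𝓝[L] x :=
      inter_mem self_mem_nhdsWithin
        (mem_nhdsWithin_of_mem_nhds (hK.isOpen_compl.mem_nhds hxK))
    have hlt := (hf x ⟨hx, hxK⟩).eventually (gt_mem_nhds hy)
    filter_upwards [nhdsWithin_le_of_mem hnhds hlt, hnhds] with z hz hzLK
    rwa [piecewise_eq_of_notMem _ _ _ hzLK.2]

variable {u : ℂ → EReal} {Ω K : Set ℂ} {w : ℂ} {ρ M m : ℝ} {f : ℂ → ℝ}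

lemma SubharmonicOn.exists_lt_circleAverage_add (hu : SubharmonicOn u Ω) {V : Set ℂ}
    (hV : IsOpen V) (hVΩ : V ⊆ Ω) (hf : ContinuousOn f V) {p : ℂ} (hp : p ∈ V)
    (hmean : ∀ᶠ r in 𝓝[>] (0 : ℝ), f p ≤ Real.circleAverage f p r) (n : ℕ) {ε : ℝ} (hε : 0 < ε)
    (w : ℂ) : ∃ r, sphere p |r| ⊆ V ∧
      CircleIntegrable (f + ε • (truncBelow u n + fun z => ‖z - w‖ ^ 2)) p r ∧
      f p + ε * (truncBelow u n p + ‖p - w‖ ^ 2) <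
        Real.circleAverage (f + ε • (truncBelow u n + fun z => ‖z - w‖ ^ 2)) p r := by
  obtain ⟨δ, hδ, hball⟩ := Metric.isOpen_iff.1 hV p hp
  obtain ⟨r, hmeanr, hr, hrδ⟩ := (hmean.and (Ioo_mem_nhdsGT hδ)).exists
  have hrV : closedBall p r ⊆ V := (closedBall_subset_ball hrδ).trans hball
  have hf' : CircleIntegrable f p r :=
    (hf.mono (sphere_subset_closedBall.trans hrV)).circleIntegrable hr.le
  have hu' := hu.circleIntegrable_truncBelow hr.le (hrV.trans hVΩ) n
  have hsq : CircleIntegrable (fun z => ‖z - w‖ ^ 2) p r :=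
    ContinuousOn.circleIntegrable hr.le (by fun_prop)
  have hq : CircleIntegrable (ε • (truncBelow u n + fun z => ‖z - w‖ ^ 2)) p r :=
    (hu'.add hsq).const_smul
  refine ⟨r, (abs_of_pos hr).symm ▸ sphere_subset_closedBall.trans hrV, hf'.add hq, ?_⟩
  rw [Real.circleAverage_add hf' hq, Real.circleAverage_smul, Real.circleAverage_add hu' hsq,
    circleAverage_norm_sub_sq, smul_eq_mul]
  have htr := hu.truncBelow_le_circleAverage hr (hrV.trans hVΩ) n
  have hr2 : 0 < ε * r ^ 2 := by positivity
  linarith [mul_le_mul_of_nonneg_left htr hε.le]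

/-- The strictly subharmonic function `f + ε (u + |z - w|²)` drops below `m + O(ε)` on `K` once `u`
is truncated far enough. -/
lemma SubharmonicOn.add_truncBelow_le (hu : SubharmonicOn u Ω) (hΩ : closedBall w ρ ⊆ Ω)
    (hK : IsClosed K) (huK : ∀ z ∈ K, u z = ⊥) (hf : ContinuousOn f (closedBall w ρ \ K))
    (hM : ∀ z ∈ closedBall w ρ \ K, f z ≤ M)
    (hmean : ∀ p ∈ ball w ρ \ K, ∀ᶠ r in 𝓝[>] (0 : ℝ), f p ≤ Real.circleAverage f p r)
    (hm : ∀ z ∈ sphere w ρ \ K, f z ≤ m) {B : ℝ}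
    (hB : ∀ n, ∀ z ∈ closedBall w ρ, truncBelow u n z ≤ B) {ε : ℝ} (hε : 0 < ε) {n : ℕ}
    (hn : M - m ≤ ε * (n + B)) {z : ℂ} (hz : z ∈ closedBall w ρ \ K) :
    f z + ε * truncBelow u n z ≤ m + ε * (B + ρ ^ 2) := by
  classical
  set q : ℂ → ℝ := ε • (truncBelow u n + fun z => ‖z - w‖ ^ 2)
  set h : ℂ → ℝ := K.piecewise (fun _ => M) f + q
  have hoff {p : ℂ} (hp : p ∉ K) : h p = f p + ε * (truncBelow u n p + ‖p - w‖ ^ 2) := by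
    simp [h, q, hp, mul_add]
  have hsq {p : ℂ} (hp : p ∈ closedBall w ρ) : ε * ‖p - w‖ ^ 2 ≤ ε * ρ ^ 2 := by
    rw [mem_closedBall, dist_eq_norm] at hp
    gcongr
  have hq : UpperSemicontinuousOn q (closedBall w ρ) :=
    (continuous_const_mul ε).comp_upperSemicontinuousOn
      (((hu.upperSemicontinuousOn_truncBelow n).mono hΩ).add
        (ContinuousOn.upperSemicontinuousOn (by fun_prop))) (monotone_mul_left_of_nonneg hε.le)
  have hmax := le_of_lt_circleAverage (isCompact_closedBall w ρ)
    ((upperSemicontinuousOn_piecewise hK hf hM).add hq) (m := m + ε * (B + ρ ^ 2))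
    (fun p hp => ?_) hz.1
  · have : 0 ≤ ε * ‖z - w‖ ^ 2 := by positivity
    linarith [(hoff hz.2).symm.trans_le hmax]
  by_cases hpK : p ∈ K
  · left
    simp only [q, Pi.add_apply, Pi.smul_apply, smul_eq_mul, piecewise_eq_of_mem _ _ _ hpK,
      truncBelow_of_eq_bot (huK p hpK)]
    linarith [hsq hp]
  by_cases hpρ : p ∈ sphere w ρ
  · left
    refine (hoff hpK).trans_le ?_
    linarith [hsq hp, hm p ⟨hpρ, hpK⟩, mul_le_mul_of_nonneg_left (hB n p hp) hε.le]
  right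
  have hpb : p ∈ ball w ρ := (mem_closedBall.1 hp).lt_of_ne hpρ
  obtain ⟨r, hr, hint, hlt⟩ := hu.exists_lt_circleAverage_add (isOpen_ball.sdiff hK)
    (sdiff_subset.trans (ball_subset_closedBall.trans hΩ))
    (hf.mono (sdiff_subset_sdiff_left ball_subset_closedBall)) ⟨hpb, hpK⟩
    (hmean p ⟨hpb, hpK⟩) n hε w
  have hcongr : EqOn (f + q) h (sphere p |r|) := fun x hx => by simp [h, (hr hx).2]
  refine ⟨r, hr.trans (sdiff_subset.trans ball_subset_closedBall),
    (circleIntegrable_congr hcongr).1 hint, ?_⟩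
  exact (hoff hpK).trans_lt (hlt.trans_eq (Real.circleAverage_congr_sphere hcongr))

lemma SubharmonicOn.le_of_le_sphere (hu : SubharmonicOn u Ω) (hΩ : closedBall w ρ ⊆ Ω)
    (hK : IsClosed K) (huK : ∀ z ∈ K, u z = ⊥) (hf : ContinuousOn f (closedBall w ρ \ K))
    (hM : ∀ z ∈ closedBall w ρ \ K, f z ≤ M)
    (hmean : ∀ p ∈ ball w ρ \ K, ∀ᶠ r in 𝓝[>] (0 : ℝ), f p ≤ Real.circleAverage f p r)
    (hm : ∀ z ∈ sphere w ρ \ K, f z ≤ m) {z : ℂ} (hz : z ∈ closedBall w ρ) (huz : u z ≠ ⊥) :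
    f z ≤ m := by
  obtain ⟨B, hB⟩ := hu.exists_truncBelow_le (isCompact_closedBall w ρ) hΩ
  have hbound : ∀ᶠ ε in 𝓝[>] (0 : ℝ), f z ≤ m + ε * (B + ρ ^ 2 - (u z).toReal) := by
    filter_upwards [self_mem_nhdsWithin] with ε hε
    obtain ⟨n, hn⟩ := exists_nat_ge ((M - m) / ε - B)
    rw [sub_le_iff_le_add, div_le_iff₀' hε] at hn
    have hle := hu.add_truncBelow_le hΩ hK huK hf hM hmean hm hB hε hn ⟨hz, fun h => huz (huK z h)⟩
    linarith [mul_le_mul_of_nonneg_left (toReal_le_truncBelow (hu.2.1 z (hΩ hz)) huz n)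
      (le_of_lt hε)]
  refine ge_of_tendsto (tendsto_nhdsWithin_of_tendsto_nhds ?_) hbound
  exact Continuous.tendsto' (by fun_prop) _ _ (by simp)

end MaximumPrinciple

section NoBoundedPotential

variable {u : ℂ → EReal} {Ω K : Set ℂ} {w : ℂ} {ρ : ℝ} {μ : Measure ℂ} [IsProbabilityMeasure μ]

lemma eventually_circleAverage_logPotential_eq (hK : IsClosed K) (hμ : ∀ᵐ ξ ∂μ, ξ ∈ K) {p : ℂ}
    (hp : p ∉ K) (hle : ∀ ξ ∈ K, ‖p - ξ‖ ≤ 1 / 2) (hfin : ∀ z, logPotential μ z < ⊤) :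
    ∀ᶠ r in 𝓝[>] (0 : ℝ), Real.circleAverage (fun z => (logPotential μ z).toReal) p r =
      (logPotential μ p).toReal := by
  obtain ⟨η, hη, hη'⟩ := exists_forall_le_norm_sub hK hp
  filter_upwards [Ioo_mem_nhdsGT (lt_min hη (show (0 : ℝ) < 1 / 2 by norm_num))] with r ⟨hr, hr'⟩
  rw [lt_min_iff] at hr'
  have hmeas : Measurable fun θ => logPotential μ (circleMap p r θ) :=
    (measurable_logPotential μ).comp (measurable_circleMap p r)
  rw [Real.circleAverage, intervalIntegral.integral_of_le Real.two_pi_pos.le,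
    integral_toReal hmeas.aemeasurable (Eventually.of_forall fun θ => hfin _),
    lintegral_circle_logPotential_eq p hr (hμ.mono fun ξ hξ => by linarith [hle ξ hξ])
      (hμ.mono fun ξ hξ => hr'.1.le.trans (hη' ξ hξ)),
    ENNReal.toReal_mul, ENNReal.toReal_ofReal Real.two_pi_pos.le, smul_eq_mul,
    inv_mul_cancel_left₀ Real.two_pi_pos.ne']

/-- The maximum principle compares the values `≤ -log (3ρ/4)` of a bounded potential on the circle
`|z - w| = ρ` with its values `≥ -log (ρ/2)` on `|z - w| < ρ/4`. -/
lemma SubharmonicOn.false_of_logPotential_le (hu : SubharmonicOn u Ω) (hΩ : IsOpen Ω)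
    (hconn : IsConnected Ω) (hne : ∃ x ∈ Ω, u x ≠ ⊥) (hρ : 0 < ρ) (hρ4 : ρ ≤ 1 / 4)
    (hρΩ : closedBall w ρ ⊆ Ω) (hK : IsCompact K) (hKw : K ⊆ closedBall w (ρ / 4))
    (huK : ∀ z ∈ K, u z = ⊥) (hμ : ∀ᵐ ξ ∂μ, ξ ∈ K) {C : ℝ}
    (hC : ∀ x ∈ K, logPotential μ x ≤ ENNReal.ofReal C) : False := by
  obtain ⟨z, hz, huz⟩ := hu.exists_ne_bot hΩ hconn hne (hρΩ (mem_closedBall_self hρ.le))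
    (ball_mem_nhds w (show 0 < ρ / 4 by positivity))
  have hKne : K.Nonempty := hμ.exists
  have hbdd (z : ℂ) : logPotential μ z ≤ ENNReal.ofReal C + ENNReal.ofReal (Real.log 2) :=
    logPotential_le_add_log_two hK hKne hμ hC z
  have htop : ENNReal.ofReal C + ENNReal.ofReal (Real.log 2) < ⊤ := by simp
  have hKw' {ξ : ℂ} (hξ : ξ ∈ K) : dist ξ w ≤ ρ / 4 := mem_closedBall.1 (hKw hξ)
  have hdist {z ξ : ℂ} (hz : z ∈ closedBall w ρ) (hξ : ξ ∈ K) : ‖z - ξ‖ ≤ 5 / 4 * ρ := by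
    rw [← dist_eq_norm]
    linarith [dist_triangle_right z ξ w, mem_closedBall.1 hz, hKw' hξ]
  have hcont : ContinuousOn (fun z => (logPotential μ z).toReal) (closedBall w ρ \ K) :=
    fun z hz => (hasFDerivAt_toReal_logPotential hK hμ hz.2 fun ξ hξ => by
      linarith [hdist hz.1 hξ]).continuousAt.continuousWithinAt
  have hmean {p : ℂ} (hp : p ∈ ball w ρ \ K) :=
    eventually_circleAverage_logPotential_eq hK.isClosed hμ hp.2
      (fun ξ hξ => by linarith [hdist (ball_subset_closedBall hp.1) hξ])
      fun z => (hbdd z).trans_lt htop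
  have hsphere : ∀ z ∈ sphere w ρ \ K, (logPotential μ z).toReal ≤ -Real.log (3 / 4 * ρ) := by
    rintro z ⟨hz, -⟩
    refine ENNReal.toReal_le_of_le_ofReal
      (neg_nonneg.2 (Real.log_nonpos (by positivity) (by linarith)))
      (logPotential_le_of_le_norm_sub (by positivity) (hμ.mono fun ξ hξ => ?_))
    rw [← dist_eq_norm]
    linarith [dist_triangle z ξ w, mem_sphere.1 hz, hKw' hξ]
  have hlow : -Real.log (1 / 2 * ρ) ≤ (logPotential μ z).toReal := by
    refine (ENNReal.ofReal_le_iff_le_toReal ((hbdd z).trans_lt htop).ne).1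
      (le_logPotential_of_norm_sub_le (hμ.mono fun ξ hξ => ?_))
    rw [← dist_eq_norm]
    linarith [dist_triangle_right z ξ w, mem_ball.1 hz, hKw' hξ]
  have hle := hu.le_of_le_sphere hρΩ hK.isClosed huK hcont
    (fun z _ => ENNReal.toReal_mono htop.ne (hbdd z))
    (fun p hp => (hmean hp).mono fun r hr => hr.ge) hsphere
    (ball_subset_closedBall (ball_subset_ball (by linarith) hz)) huz
  have : Real.log (1 / 2 * ρ) < Real.log (3 / 4 * ρ) :=
    Real.log_lt_log (by positivity) (by linarith)
  linarith

end NoBoundedPotential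

/-! ### Green's formula on a disc -/

lemma circleMap_zero_mem_ball_zero {R : ℝ} {p : ℝ × ℝ} (hp : 0 < p.1) :
    circleMap 0 p.1 p.2 ∈ ball (0 : ℂ) R ↔ p.1 < R := by
  rw [mem_ball_zero_iff, norm_circleMap_zero, abs_of_pos hp]

lemma setIntegral_ball_eq_setIntegral_circleMap {E : Type*} [NormedAddCommGroup E]
    [NormedSpace ℝ E] (g : ℂ → E) (c : ℂ) (R : ℝ) :
    ∫ z in ball c R, g z =
      ∫ p in Icc ((0 : ℝ), -Real.pi) (R, Real.pi), p.1 • g (circleMap c p.1 p.2) := by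
  have htranslate : ∫ z in ball c R, g z =
      ∫ z, (ball (0 : ℂ) R).indicator (fun z => g (c + z)) z := by
    rw [← integral_indicator measurableSet_ball, ← integral_add_left_eq_self _ c]
    refine integral_congr_ae (Eventually.of_forall fun z => ?_)
    simp only [indicator, mem_ball, dist_self_add_left, dist_zero_right]
  rw [htranslate, ← Complex.integral_comp_polarCoord_symm]
  have hpolar : ∀ p ∈ polarCoord.target,
      p.1 • (ball (0 : ℂ) R).indicator (fun z => g (c + z)) (Complex.polarCoord.symm p) =
        (Iio R ×ˢ univ).indicator (fun p : ℝ × ℝ => p.1 • g (circleMap c p.1 p.2)) p := by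
    rintro p ⟨hp, -⟩
    have hmap : Complex.polarCoord.symm p = circleMap 0 p.1 p.2 := by
      simp [circleMap, Complex.exp_mul_I]
    rw [hmap]
    by_cases h : p.1 < R
    · rw [indicator_of_mem ((circleMap_zero_mem_ball_zero hp).2 h),
        indicator_of_mem (by simpa using h)]
      simp [circleMap]
    · rw [indicator_of_notMem (mt (circleMap_zero_mem_ball_zero hp).1 h),
        indicator_of_notMem (by simpa using h), smul_zero]
  rw [setIntegral_congr_fun polarCoord.open_target.measurableSet hpolar,
    setIntegral_indicator (measurableSet_Iio.prod MeasurableSet.univ), polarCoord_target,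
    prod_inter_prod, inter_univ, Ioi_inter_Iio, ← Icc_prod_Icc]
  exact setIntegral_congr_set (Measure.set_prod_ae_eq Ioo_ae_eq_Icc Ioo_ae_eq_Icc)

lemma hasFDerivAt_cexp_mul_I (p : ℝ × ℝ) :
    HasFDerivAt (fun p : ℝ × ℝ => Complex.exp (p.2 * Complex.I))
      ((Complex.exp (p.2 * Complex.I) * Complex.I) •
        Complex.ofRealCLM.comp (ContinuousLinearMap.snd ℝ ℝ ℝ)) p := by
  have h := ((Complex.ofRealCLM.comp (ContinuousLinearMap.snd ℝ ℝ ℝ)).hasFDerivAt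
    (x := p)).mul_const Complex.I
  rw [mul_smul]
  exact h.cexp

lemma hasFDerivAt_circleMap (c : ℂ) (p : ℝ × ℝ) :
    HasFDerivAt (fun p : ℝ × ℝ => circleMap c p.1 p.2)
      ((p.1 : ℂ) • (Complex.exp (p.2 * Complex.I) * Complex.I) •
          Complex.ofRealCLM.comp (ContinuousLinearMap.snd ℝ ℝ ℝ) +
        Complex.exp (p.2 * Complex.I) •
          Complex.ofRealCLM.comp (ContinuousLinearMap.fst ℝ ℝ ℝ)) p :=
  (((Complex.ofRealCLM.comp (ContinuousLinearMap.fst ℝ ℝ ℝ)).hasFDerivAt.mul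
    (hasFDerivAt_cexp_mul_I p))).const_add c

lemma intervalIntegral_circleMap_smul {E : Type*} [NormedAddCommGroup E] [NormedSpace ℂ E]
    (f : ℂ → E) (c : ℂ) (R : ℝ) :
    ∫ θ in (-Real.pi)..Real.pi,
      (R * (Complex.exp (θ * Complex.I) * Complex.I)) • f (circleMap c R θ) =
      ∮ z in C(c, R), f z := by
  have hper : Function.Periodic
      (fun θ : ℝ => deriv (circleMap c R) θ • f (circleMap c R θ)) (2 * Real.pi) := fun θ => by
    simp only [deriv_circleMap, periodic_circleMap c R θ, periodic_circleMap 0 R θ]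
  have h := hper.intervalIntegral_add_eq (-Real.pi) 0
  rw [zero_add, show -Real.pi + 2 * Real.pi = Real.pi by ring] at h
  rw [circleIntegral, ← h]
  simp only [deriv_circleMap, circleMap_zero, mul_assoc]

lemma map_cexp_mul_I {E : Type*} [NormedAddCommGroup E] [NormedSpace ℂ E] (L : ℂ →L[ℝ] E)
    (θ : ℝ) :
    Complex.exp (θ * Complex.I) • (Complex.I • L (Complex.exp (θ * Complex.I)) -
      L (Complex.exp (θ * Complex.I) * Complex.I)) = Complex.I • L 1 - L Complex.I := by
  have hL : ∀ z : ℂ, L z = z.re • L 1 + z.im • L Complex.I := fun z => by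
    rw [← map_smul, ← map_smul, ← map_add]
    simp only [Complex.real_smul, mul_one, Complex.re_add_im]
  have hpyth := Complex.cos_sq_add_sin_sq θ
  rw [hL (Complex.exp _), hL (Complex.exp _ * Complex.I), Complex.mul_I_re, Complex.mul_I_im,
    Complex.exp_ofReal_mul_I_re, Complex.exp_ofReal_mul_I_im, Complex.exp_mul_I,
    ← Complex.ofReal_cos, ← Complex.ofReal_sin]
  simp only [← Complex.coe_smul]
  match_scalars
  · linear_combination Complex.I * hpyth + Complex.cos θ * Complex.sin θ * Complex.I_mul_I
  · linear_combination -hpyth + Complex.sin θ ^ 2 * Complex.I_mul_I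

lemma exists_hasFDerivAt_polar {E : Type*} [NormedAddCommGroup E] [NormedSpace ℂ E] {f : ℂ → E}
    {L : ℂ →L[ℝ] E} {c : ℂ} {p : ℝ × ℝ} (hf : HasFDerivAt f L (circleMap c p.1 p.2)) :
    ∃ V' W' : ℝ × ℝ →L[ℝ] E,
      HasFDerivAt (fun p : ℝ × ℝ => ((p.1 : ℂ) * (Complex.exp (p.2 * Complex.I) * Complex.I)) •
        f (circleMap c p.1 p.2)) V' p ∧
      HasFDerivAt (fun p : ℝ × ℝ => -(Complex.exp (p.2 * Complex.I) •
        f (circleMap c p.1 p.2))) W' p ∧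
      V' (1, 0) + W' (0, 1) = p.1 • (Complex.I • L 1 - L Complex.I) := by
  have hcomp := hf.comp p (hasFDerivAt_circleMap c p)
  have hrad : HasFDerivAt (fun p : ℝ × ℝ => (p.1 : ℂ)) _ p :=
    (Complex.ofRealCLM.comp (ContinuousLinearMap.fst ℝ ℝ ℝ)).hasFDerivAt
  have hexp := hasFDerivAt_cexp_mul_I p
  refine ⟨_, _, (hrad.mul (hexp.mul_const Complex.I)).smul hcomp, (hexp.smul hcomp).neg, ?_⟩
  rw [← map_cexp_mul_I L p.2]
  have hL : ∀ z : ℂ, L (p.1 * z) = (p.1 : ℂ) • L z := fun z => by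
    rw [← Complex.real_smul, map_smul, Complex.coe_smul]
  simp only [Pi.mul_apply, ContinuousLinearMap.comp_add, smul_add, add_apply, smul_apply,
    ContinuousLinearMap.comp_apply, ContinuousLinearMap.coe_snd', Complex.ofRealCLM_apply,
    smul_eq_mul, mul_zero, map_zero, smul_zero,
    ContinuousLinearMap.coe_fst', Complex.ofReal_one, mul_one, zero_add,
    ContinuousLinearMap.smulRight_apply, Function.comp_apply, neg_add_rev, neg_apply, neg_zero,
    hL, Complex.coe_smul, add_add_neg_add_cancel]
  module

-- In polar coordinates, with `e = exp (θ i)`, the field `(i r e f, -e f)` on the rectangle has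
-- divergence `r (i f' 1 - f' i)`.
theorem circleIntegral_eq_setIntegral_ball {E : Type*} [NormedAddCommGroup E] [NormedSpace ℂ E]
    {f : ℂ → E} {f' : ℂ → ℂ →L[ℝ] E} {c : ℂ} {R : ℝ} (hR : 0 ≤ R)
    (hf : ∀ z ∈ closedBall c R, HasFDerivAt f (f' z) z)
    (hf' : ContinuousOn (fun z => Complex.I • f' z 1 - f' z Complex.I) (closedBall c R)) :
    ∮ z in C(c, R), f z = ∫ z in ball c R, (Complex.I • f' z 1 - f' z Complex.I) := by
  set Q := Icc ((0 : ℝ), -Real.pi) (R, Real.pi)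
  have hmem : ∀ p ∈ Q, circleMap c p.1 p.2 ∈ closedBall c R := fun p hp =>
    closedBall_subset_closedBall hp.2.1 (circleMap_mem_closedBall c hp.1.1 p.2)
  choose! V' W' hV hW hVW using fun p hp => exists_hasFDerivAt_polar (hf _ (hmem p hp))
  have hQ : ∀ p ∈ Ioo 0 R ×ˢ Ioo (-Real.pi) Real.pi, p ∈ Q := fun p hp =>
    ⟨⟨hp.1.1.le, hp.2.1.le⟩, ⟨hp.1.2.le, hp.2.2.le⟩⟩
  have hcont : ContinuousOn (fun p : ℝ × ℝ => p.1 • (Complex.I • f' (circleMap c p.1 p.2) 1 -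
      f' (circleMap c p.1 p.2) Complex.I)) Q :=
    continuous_fst.continuousOn.smul (hf'.comp (fun p _ =>
      (hasFDerivAt_circleMap c p).continuousAt.continuousWithinAt) hmem)
  have hdiv := integral_divergence_prod_Icc_of_hasFDerivAt_of_le _ _ V' W' (0, -Real.pi)
    (R, Real.pi) ⟨hR, by linarith [Real.pi_pos]⟩
    (fun p hp => (hV p hp).continuousAt.continuousWithinAt)
    (fun p hp => (hW p hp).continuousAt.continuousWithinAt)
    (fun p hp => hV p (hQ p hp)) (fun p hp => hW p (hQ p hp))
    ((hcont.congr hVW).integrableOn_compact isCompact_Icc)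
  have hperiodic : ∀ r : ℝ, circleMap c r (-Real.pi) = circleMap c r Real.pi := fun r => by
    simp [circleMap]
  rw [setIntegral_ball_eq_setIntegral_circleMap, ← setIntegral_congr_fun measurableSet_Icc hVW,
    hdiv, ← intervalIntegral_circleMap_smul]
  simp [hperiodic]

/-! ### Removability of sets with infinite potential -/

/-- `p` is an Evans potential of the closed set `K` on `s`: it tends to `+∞` at every point of `K`,
and on `s \ K` its differential is `-Re (q dz)` for a holomorphic `q`. Such a `p` is harmonic on
`s \ K`; it provides the cut-off functions showing that `K` is removable. -/
structure IsEvansPotentialOn (p : ℂ → ℝ) (q : ℂ → ℂ) (K s : Set ℂ) : Prop where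
  isClosed : IsClosed K
  tendsto_atTop : ∀ x ∈ K, Tendsto p (𝓝[Kᶜ] x) atTop
  hasFDerivAt : ∀ z ∈ s \ K, HasFDerivAt p (-reMulCLM (q z)) z
  differentiableAt : ∀ z ∈ s \ K, DifferentiableAt ℂ q z

lemma eventuallyEq_indicator_compl {E : Type*} [Zero E] {K : Set ℂ} (hK : IsClosed K) (g : ℂ → E)
    {z : ℂ} (hz : z ∉ K) : Kᶜ.indicator g =ᶠ[𝓝 z] g :=
  Filter.mem_of_superset (hK.isOpen_compl.mem_nhds hz) fun _ hy => indicator_of_mem hy g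

lemma hasDerivAt_integral_left {β : ℝ → ℝ} (hβ : Continuous β) (T t : ℝ) :
    HasDerivAt (fun t => ∫ x in t..T, β x) (-β t) t :=
  intervalIntegral.integral_hasDerivAt_left (hβ.intervalIntegrable _ _)
    (hβ.stronglyMeasurableAtFilter _ _) hβ.continuousAt

namespace IsEvansPotentialOn

variable {K s : Set ℂ} {c : ℂ} {R T₀ T₁ : ℝ} {p : ℂ → ℝ} {q g h : ℂ → ℂ} {β : ℝ → ℝ}

lemma eventuallyEq_zero_indicator_comp_mul (hp : IsEvansPotentialOn p q K s)
    (hβ : ∀ t, T₁ ≤ t → β t = 0) (g : ℂ → ℂ) {x : ℂ} (hx : x ∈ K) :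
    Kᶜ.indicator (fun z => (β (p z) : ℂ) * g z) =ᶠ[𝓝 x] 0 := by
  filter_upwards [eventually_nhdsWithin_iff.1 ((hp.tendsto_atTop x hx).eventually_ge_atTop T₁)]
    with z hz
  by_cases hzK : z ∈ K
  · exact indicator_of_notMem (not_not.2 hzK) _
  · rw [indicator_of_mem (mem_compl hzK), hβ _ (hz hzK), Complex.ofReal_zero, zero_mul,
      Pi.zero_apply]

lemma continuousOn_indicator_comp_mul (hp : IsEvansPotentialOn p q K s) (hβ : Continuous β)
    (hβ₁ : ∀ t, T₁ ≤ t → β t = 0) (hg : ∀ z ∈ s \ K, ContinuousAt g z) :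
    ContinuousOn (Kᶜ.indicator fun z => (β (p z) : ℂ) * g z) s := fun z hz => by
  refine ContinuousAt.continuousWithinAt ?_
  by_cases hzK : z ∈ K
  · exact continuousAt_const.congr (hp.eventuallyEq_zero_indicator_comp_mul hβ₁ g hzK).symm
  · refine ContinuousAt.congr ?_ (eventuallyEq_indicator_compl hp.isClosed _ hzK).symm
    exact (Complex.continuous_ofReal.continuousAt.comp
      (hβ.continuousAt.comp (hp.hasFDerivAt z ⟨hz, hzK⟩).continuousAt)).mul (hg z ⟨hz, hzK⟩)

lemma integrableOn_comp_mul (hp : IsEvansPotentialOn p q K (closedBall c R)) (hβ : Continuous β)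
    (hβ₁ : ∀ t, T₁ ≤ t → β t = 0) (hg : ∀ z ∈ closedBall c R \ K, ContinuousAt g z) :
    IntegrableOn (fun z => (β (p z) : ℂ) * g z) (ball c R \ K) := by
  have h := (hp.continuousOn_indicator_comp_mul hβ hβ₁ hg).integrableOn_compact (μ := volume)
    (isCompact_closedBall c R)
  refine ((integrableOn_indicator_iff hp.isClosed.measurableSet.compl).1 h).mono_set ?_
  exact fun z hz => ⟨hz.2, ball_subset_closedBall hz.1⟩

lemma exists_hasFDerivAt_indicator_comp_mul (hp : IsEvansPotentialOn p q K s) {B : ℝ → ℝ}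
    (hB : ∀ t, HasDerivAt B (-β t) t) (hB₁ : ∀ t, T₁ ≤ t → B t = 0)
    (hh : ∀ z ∈ s \ K, DifferentiableAt ℂ h z) {z : ℂ} (hz : z ∈ s) :
    ∃ L : ℂ →L[ℝ] ℂ, HasFDerivAt (Kᶜ.indicator fun z => (B (p z) : ℂ) * h z) L z ∧
      Complex.I • L 1 - L Complex.I =
        Complex.I * Kᶜ.indicator (fun z => (β (p z) : ℂ) * (h z * starRingEnd ℂ (q z))) z := by
  by_cases hzK : z ∈ K
  · refine ⟨0, (hasFDerivAt_const (0 : ℂ) z).congr_of_eventuallyEq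
      (hp.eventuallyEq_zero_indicator_comp_mul hB₁ h hzK), ?_⟩
    simp [hzK]
  · have hcomp := Complex.ofRealCLM.hasFDerivAt.comp z
      ((hB (p z)).comp_hasFDerivAt z (hp.hasFDerivAt z ⟨hz, hzK⟩))
    refine ⟨_, (hcomp.mul ((hh z ⟨hz, hzK⟩).hasFDerivAt.restrictScalars ℝ)).congr_of_eventuallyEq
      (eventuallyEq_indicator_compl hp.isClosed _ hzK), ?_⟩
    have hlin : fderiv ℂ h z Complex.I = Complex.I * fderiv ℂ h z 1 := by
      rw [← smul_eq_mul, ← map_smul, smul_eq_mul, mul_one]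
    rw [indicator_of_mem (mem_compl hzK)]
    simp only [add_apply, smul_apply, ContinuousLinearMap.coe_restrictScalars',
      ContinuousLinearMap.comp_apply, neg_apply, reMulCLM_apply, smul_eq_mul, hlin,
      Complex.ofRealCLM_apply, Function.comp_apply]
    apply Complex.ext <;> simp <;> ring

-- Apply Green's formula to `B ∘ p * h`, where `B t = ∫ x in t..T₁, β x` is constant for `t ≤ T₀`
-- and vanishes for `t ≥ T₁`.
lemma intervalIntegral_mul_circleIntegral (hp : IsEvansPotentialOn p q K (closedBall c R))
    (hR : 0 ≤ R) (hβ : Continuous β) (hβ₀ : ∀ t ≤ T₀, β t = 0) (hβ₁ : ∀ t, T₁ ≤ t → β t = 0)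
    (hsphere : ∀ z ∈ sphere c R, z ∉ K ∧ p z ≤ T₀)
    (hh : ∀ z ∈ closedBall c R \ K, DifferentiableAt ℂ h z) :
    ((∫ t in T₀..T₁, β t : ℝ) : ℂ) * ∮ z in C(c, R), h z =
      Complex.I * ∫ z in ball c R \ K, (β (p z) : ℂ) * (h z * starRingEnd ℂ (q z)) := by
  have hzero : ∀ t u, (∀ x ∈ uIcc t u, β x = 0) → ∫ x in t..u, β x = 0 := fun t u h =>
    (intervalIntegral.integral_congr h).trans intervalIntegral.integral_zero
  have hB₀ : ∀ t ≤ T₀, ∫ x in t..T₁, β x = ∫ x in T₀..T₁, β x := fun t ht => by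
    rw [← intervalIntegral.integral_add_adjacent_intervals (hβ.intervalIntegrable t T₀)
      (hβ.intervalIntegrable T₀ T₁), hzero t T₀ fun x hx => hβ₀ x (uIcc_of_le ht ▸ hx).2, zero_add]
  have hB₁ : ∀ t, T₁ ≤ t → ∫ x in t..T₁, β x = 0 := fun t ht =>
    hzero t T₁ fun x hx => hβ₁ x (uIcc_of_ge ht ▸ hx).1
  choose! L hL hLeq using fun z hz => hp.exists_hasFDerivAt_indicator_comp_mul
    (hasDerivAt_integral_left hβ T₁) hB₁ hh (z := z) hz
  have hcont : ContinuousOn (fun z => Complex.I • L z 1 - L z Complex.I) (closedBall c R) :=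
    (continuousOn_const.mul (hp.continuousOn_indicator_comp_mul hβ hβ₁ fun z hz =>
      (hh z hz).continuousAt.mul (Complex.continuous_conj.continuousAt.comp
        (hp.differentiableAt z hz).continuousAt))).congr hLeq
  rw [sdiff_eq, ← setIntegral_indicator hp.isClosed.measurableSet.compl, ← integral_const_mul,
    ← setIntegral_congr_fun measurableSet_ball fun z hz => hLeq z (ball_subset_closedBall hz),
    ← circleIntegral_eq_setIntegral_ball hR hL hcont, ← circleIntegral.integral_const_mul]
  refine circleIntegral.integral_congr hR fun z hz => ?_
  rw [indicator_of_mem (mem_compl (hsphere z hz).1), hB₀ _ (hsphere z hz).2]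

lemma integrableOn_sq_mul_norm_sq (hp : IsEvansPotentialOn p q K (closedBall c R))
    (hβ : Continuous β) (hβ₁ : ∀ t, T₁ ≤ t → β t = 0) :
    IntegrableOn (fun z => β (p z) ^ 2 * ‖q z‖ ^ 2) (ball c R \ K) := by
  have h := hp.integrableOn_comp_mul (T₁ := T₁) (β := fun t => β t ^ 2)
    (g := fun z => (‖q z‖ ^ 2 : ℝ)) (hβ.pow 2) (fun t ht => by simp [hβ₁ t ht]) fun z hz => by
      have := (hp.differentiableAt z hz).continuousAt
      fun_prop
  exact h.re.congr (Eventually.of_forall fun z =>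
    (congrArg Complex.re (Complex.ofReal_mul _ _).symm).trans (Complex.ofReal_re _))

lemma setIntegral_sq_mul_norm_sq (hp : IsEvansPotentialOn p q K (closedBall c R)) (hR : 0 ≤ R)
    (hβ : Continuous β) (hβ₀ : ∀ t ≤ T₀, β t = 0) (hβ₁ : ∀ t, T₁ ≤ t → β t = 0)
    (hsphere : ∀ z ∈ sphere c R, z ∉ K ∧ p z ≤ T₀) :
    ∫ z in ball c R \ K, β (p z) ^ 2 * ‖q z‖ ^ 2 =
      |∫ t in T₀..T₁, β t ^ 2| * ‖∮ z in C(c, R), q z‖ := by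
  have h := hp.intervalIntegral_mul_circleIntegral (T₁ := T₁) (β := fun t => β t ^ 2) hR
    (hβ.pow 2) (fun t ht => by simp [hβ₀ t ht])
    (fun t ht => by simp [hβ₁ t ht]) hsphere hp.differentiableAt
  have hconj : ∀ z, ((β (p z) ^ 2 : ℝ) : ℂ) * (q z * starRingEnd ℂ (q z)) =
      ((β (p z) ^ 2 * ‖q z‖ ^ 2 : ℝ) : ℂ) := fun z => by
    rw [Complex.mul_conj, Complex.normSq_eq_norm_sq, ← Complex.ofReal_mul]
  simp only [hconj, integral_complex_ofReal] at h
  have hnorm := congrArg norm h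
  rw [norm_mul, norm_mul, Complex.norm_I, one_mul, Complex.norm_real, Complex.norm_real,
    Real.norm_eq_abs, Real.norm_of_nonneg (integral_nonneg fun z => by positivity)] at hnorm
  exact hnorm.symm

lemma intervalIntegral_mul_norm_circleIntegral_le
    (hp : IsEvansPotentialOn p q K (closedBall c R)) (hR : 0 ≤ R) (hβ : Continuous β)
    (hβ₀ : ∀ t ≤ T₀, β t = 0) (hβ₁ : ∀ t, T₁ ≤ t → β t = 0)
    (hsphere : ∀ z ∈ sphere c R, z ∉ K ∧ p z ≤ T₀)
    (hh : ∀ z ∈ closedBall c R \ K, DifferentiableAt ℂ h z)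
    (hint : IntegrableOn (fun z => ‖h z‖ ^ 2) (ball c R \ K)) {l : ℝ} (hl : 0 < l) :
    |∫ t in T₀..T₁, β t| * ‖∮ z in C(c, R), h z‖ ≤
      l * (|∫ t in T₀..T₁, β t ^ 2| * ‖∮ z in C(c, R), q z‖) +
        l⁻¹ * ∫ z in ball c R \ K, ‖h z‖ ^ 2 := by
  have hq := hp.integrableOn_sq_mul_norm_sq hβ hβ₁
  calc |∫ t in T₀..T₁, β t| * ‖∮ z in C(c, R), h z‖
      = ‖∫ z in ball c R \ K, (β (p z) : ℂ) * (h z * starRingEnd ℂ (q z))‖ := by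
        rw [← Real.norm_eq_abs, ← Complex.norm_real, ← norm_mul,
          hp.intervalIntegral_mul_circleIntegral hR hβ hβ₀ hβ₁ hsphere hh, norm_mul,
          Complex.norm_I, one_mul]
    _ ≤ ∫ z in ball c R \ K, (l * (β (p z) ^ 2 * ‖q z‖ ^ 2) + l⁻¹ * ‖h z‖ ^ 2) := by
        refine norm_integral_le_of_norm_le ((hq.const_mul l).add (hint.const_mul l⁻¹))
          (Eventually.of_forall fun z => ?_)
        rw [norm_mul, norm_mul, Complex.norm_real, RCLike.norm_conj, Real.norm_eq_abs]
        have hsq : l * (β (p z) ^ 2 * ‖q z‖ ^ 2) + l⁻¹ * ‖h z‖ ^ 2 -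
            |β (p z)| * (‖h z‖ * ‖q z‖) =
            l * (|β (p z)| * ‖q z‖ - l⁻¹ * ‖h z‖ / 2) ^ 2 + 3 / 4 * l⁻¹ * ‖h z‖ ^ 2 := by
          rw [← sq_abs (β (p z))]
          field_simp
          ring
        exact sub_nonneg.1 (hsq ▸ by positivity)
    _ = _ := by
        rw [integral_add (hq.const_mul l) (hint.const_mul l⁻¹), integral_const_mul,
          integral_const_mul, hp.setIntegral_sq_mul_norm_sq hR hβ hβ₀ hβ₁ hsphere]

end IsEvansPotentialOn

/-- The continuous trapezoidal cut-off with values in `[0, 1]` which is supported in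
`[T, T + N + 2]` and equal to `1` on `[T + 1, T + N + 1]`. -/
noncomputable def trapezoid (T N t : ℝ) : ℝ := max 0 (min 1 (min (t - T) (T + N + 2 - t)))

lemma continuous_trapezoid (T N : ℝ) : Continuous (trapezoid T N) := by
  unfold trapezoid
  fun_prop

lemma trapezoid_mem_Icc (T N t : ℝ) : trapezoid T N t ∈ Icc 0 1 :=
  ⟨le_max_left _ _, max_le zero_le_one (min_le_left _ _)⟩

lemma trapezoid_of_le {T N t : ℝ} (h : t ≤ T) : trapezoid T N t = 0 :=
  max_eq_left (min_le_of_right_le (min_le_of_left_le (by linarith)))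

lemma trapezoid_of_ge {T N t : ℝ} (h : T + N + 2 ≤ t) : trapezoid T N t = 0 :=
  max_eq_left (min_le_of_right_le (min_le_of_right_le (by linarith)))

lemma trapezoid_eq_one {T N t : ℝ} (h : t ∈ Icc (T + 1) (T + N + 1)) : trapezoid T N t = 1 := by
  rw [trapezoid, min_eq_left (le_min (by linarith [h.1]) (by linarith [h.2])),
    max_eq_right zero_le_one]

lemma le_integral_trapezoid (T : ℝ) {N : ℝ} (hN : 0 ≤ N) :
    N ≤ ∫ t in T..(T + N + 2), trapezoid T N t := by
  have hone : ∫ t in (T + 1)..(T + N + 1), trapezoid T N t = N := by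
    rw [intervalIntegral.integral_congr (g := fun _ => 1) fun t ht =>
      trapezoid_eq_one (uIcc_of_le (by linarith : T + 1 ≤ T + N + 1) ▸ ht)]
    simp
  calc N = ∫ t in (T + 1)..(T + N + 1), trapezoid T N t := hone.symm
    _ ≤ _ := intervalIntegral.integral_mono_interval (by linarith) (by linarith) (by linarith)
      (Eventually.of_forall fun t => (trapezoid_mem_Icc T N t).1)
      ((continuous_trapezoid T N).intervalIntegrable _ _)

lemma integral_trapezoid_sq_le (T : ℝ) {N : ℝ} (hN : 0 ≤ N) :
    ∫ t in T..(T + N + 2), trapezoid T N t ^ 2 ≤ ∫ t in T..(T + N + 2), trapezoid T N t :=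
  intervalIntegral.integral_mono_on (by linarith)
    (((continuous_trapezoid T N).pow 2).intervalIntegrable _ _)
    ((continuous_trapezoid T N).intervalIntegrable _ _) fun t _ =>
      pow_le_of_le_one (trapezoid_mem_Icc T N t).1 (trapezoid_mem_Icc T N t).2 two_ne_zero

namespace IsEvansPotentialOn

variable {K : Set ℂ} {c : ℂ} {R : ℝ} {p : ℂ → ℝ} {q h : ℂ → ℂ}

lemma norm_circleIntegral_le (hp : IsEvansPotentialOn p q K (closedBall c R)) (hR : 0 ≤ R)
    {T : ℝ} (hsphere : ∀ z ∈ sphere c R, z ∉ K ∧ p z ≤ T)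
    (hh : ∀ z ∈ closedBall c R \ K, DifferentiableAt ℂ h z)
    (hint : IntegrableOn (fun z => ‖h z‖ ^ 2) (ball c R \ K)) {l N : ℝ} (hl : 0 < l)
    (hN : 0 < N) :
    ‖∮ z in C(c, R), h z‖ ≤
      l * ‖∮ z in C(c, R), q z‖ + (l⁻¹ * ∫ z in ball c R \ K, ‖h z‖ ^ 2) / N := by
  have hbound := hp.intervalIntegral_mul_norm_circleIntegral_le hR (continuous_trapezoid T N)
    (fun _ => trapezoid_of_le) (fun _ => trapezoid_of_ge) hsphere hh hint hl
  have hNk := le_integral_trapezoid T hN.le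
  have hsq := integral_trapezoid_sq_le T hN.le
  have hsq₀ : 0 ≤ ∫ t in T..(T + N + 2), trapezoid T N t ^ 2 :=
    intervalIntegral.integral_nonneg (by linarith) fun t _ => sq_nonneg _
  set k := ∫ t in T..(T + N + 2), trapezoid T N t
  have hk : 0 < k := hN.trans_le hNk
  set A := ‖∮ z in C(c, R), q z‖
  have hE : 0 ≤ l⁻¹ * ∫ z in ball c R \ K, ‖h z‖ ^ 2 :=
    mul_nonneg (inv_nonneg.2 hl.le) (integral_nonneg fun z => by positivity)
  set E := l⁻¹ * ∫ z in ball c R \ K, ‖h z‖ ^ 2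
  rw [abs_of_pos hk, abs_of_nonneg hsq₀] at hbound
  refine le_of_mul_le_mul_left (hbound.trans ?_) hk
  calc l * ((∫ t in T..(T + N + 2), trapezoid T N t ^ 2) * A) + E
      ≤ l * (k * A) + N * (E / N) := by
        rw [mul_div_cancel₀ E hN.ne']
        gcongr
    _ ≤ l * (k * A) + k * (E / N) := by gcongr
    _ = k * (l * A + E / N) := by ring

theorem circleIntegral_eq_zero (hp : IsEvansPotentialOn p q K (closedBall c R)) (hR : 0 ≤ R)
    (hK : Disjoint (sphere c R) K) (hh : ∀ z ∈ closedBall c R \ K, DifferentiableAt ℂ h z)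
    (hint : IntegrableOn (fun z => ‖h z‖ ^ 2) (ball c R \ K)) : ∮ z in C(c, R), h z = 0 := by
  have hoff : ∀ z ∈ sphere c R, z ∈ closedBall c R \ K := fun z hz =>
    ⟨sphere_subset_closedBall hz, hK.notMem_of_mem_left hz⟩
  obtain ⟨T, hT⟩ := (isCompact_sphere c R).bddAbove_image fun z hz =>
    (hp.hasFDerivAt z (hoff z hz)).continuousAt.continuousWithinAt
  have hbound := fun l (hl : 0 < l) N (hN : 0 < N) => hp.norm_circleIntegral_le hR
    (fun z hz => ⟨(hoff z hz).2, hT (mem_image_of_mem p hz)⟩) hh hint hl hN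
  have hlimN : ∀ l, 0 < l → ‖∮ z in C(c, R), h z‖ ≤ l * ‖∮ z in C(c, R), q z‖ := fun l hl => by
    have hlim := (tendsto_const_nhds (x := l * ‖∮ z in C(c, R), q z‖)).add
      ((tendsto_const_nhds (x := l⁻¹ * ∫ z in ball c R \ K, ‖h z‖ ^ 2)).div_atTop tendsto_id)
    rw [add_zero] at hlim
    exact ge_of_tendsto hlim ((eventually_gt_atTop 0).mono (hbound l hl))
  have hlim := (tendsto_id.mono_left (nhdsWithin_le_nhds (a := (0 : ℝ)) (s := Ioi 0))).mul_const
    ‖∮ z in C(c, R), q z‖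
  rw [zero_mul] at hlim
  exact norm_le_zero_iff.1 (ge_of_tendsto hlim (eventually_mem_nhdsWithin.mono hlimN))

end IsEvansPotentialOn

lemma isEvansPotentialOn_logPotential {K s : Set ℂ} {ν : Measure ℂ} [IsProbabilityMeasure ν]
    (hK : IsCompact K) (hν : ∀ᵐ ξ ∂ν, ξ ∈ K) (htop : ∀ x ∈ K, logPotential ν x = ⊤)
    (hs : ∀ z ∈ s, ∀ ξ ∈ K, ‖z - ξ‖ < 1) :
    IsEvansPotentialOn (fun z => (logPotential ν z).toReal) (cauchyTransform ν 1) K s where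
  isClosed := hK.isClosed
  tendsto_atTop x hx := tendsto_atTop.2 fun T => by
    have hlarge : ∀ᶠ z in 𝓝 x, ENNReal.ofReal T < logPotential ν z :=
      lowerSemicontinuous_logPotential ν x _
        (show _ < logPotential ν x by rw [htop x hx]; exact ENNReal.ofReal_lt_top)
    filter_upwards [nhdsWithin_le_nhds hlarge, self_mem_nhdsWithin] with z hz hzK
    exact (ENNReal.ofReal_le_iff_le_toReal (logPotential_lt_top hK.isClosed hν hzK).ne).1 hz.le
  hasFDerivAt z hz := hasFDerivAt_toReal_logPotential hK hν hz.2 (hs z hz.1)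
  differentiableAt z hz := (differentiableOn_cauchyTransform hK.isClosed hν
    (integrable_const 1)).differentiableAt (hK.isClosed.isOpen_compl.mem_nhds hz.2)

/-! ### Extension across sets with infinite potential -/

section Extension

variable {D S K : Set ℂ} {f : ℂ → ℂ}

lemma integrableOn_norm_sq_of_mem_L2h (hD : IsOpen D) (hf : f ∈ L2h D) :
    IntegrableOn (fun z => ‖f z‖ ^ 2) D := by
  refine ⟨(hf.1.continuousOn.norm.pow 2).aestronglyMeasurable hD.measurableSet, ?_⟩
  rw [hasFiniteIntegral_iff_enorm]
  refine (lintegral_congr fun z => ?_).trans_lt hf.2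
  rw [enorm_pow, enorm_norm, enorm_eq_nnnorm]

lemma norm_slope_sq_le {z z₀ : ℂ} {δ : ℝ} (hδ : 0 < δ) (hz : δ ≤ ‖z - z₀‖) :
    ‖slope f z₀ z‖ ^ 2 ≤ 2 / δ ^ 2 * (‖f z₀‖ ^ 2 + ‖f z‖ ^ 2) := by
  have hle : ‖slope f z₀ z‖ ≤ (‖f z‖ + ‖f z₀‖) / δ := by
    rw [slope_def_field, norm_div]
    gcongr
    exact norm_sub_le _ _
  calc ‖slope f z₀ z‖ ^ 2 ≤ ((‖f z‖ + ‖f z₀‖) / δ) ^ 2 := by gcongr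
    _ = (‖f z‖ + ‖f z₀‖) ^ 2 / δ ^ 2 := div_pow _ _ _
    _ ≤ 2 * (‖f z‖ ^ 2 + ‖f z₀‖ ^ 2) / δ ^ 2 := by
        gcongr
        exact add_sq_le
    _ = 2 / δ ^ 2 * (‖f z₀‖ ^ 2 + ‖f z‖ ^ 2) := by ring

lemma integrableOn_norm_dslope_sq (hD : IsOpen D) (hf : f ∈ L2h D) {z₀ : ℂ} (hz₀ : z₀ ∈ D)
    (hS : MeasurableSet S) (hSD : S ⊆ D) (hvol : volume S ≠ ⊤) :
    IntegrableOn (fun z => ‖dslope f z₀ z‖ ^ 2) S := by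
  have hcont : ContinuousOn (dslope f z₀) D :=
    ((Complex.differentiableOn_dslope (hD.mem_nhds hz₀)).2 hf.1).continuousOn
  obtain ⟨δ, hδ, hδD⟩ := Metric.nhds_basis_closedBall.mem_iff.1 (hD.mem_nhds hz₀)
  obtain ⟨M, hM⟩ :=
    (isCompact_closedBall z₀ δ).exists_bound_of_continuousOn (hcont.mono hδD)
  have hdom : IntegrableOn (fun z => M ^ 2 + 2 / δ ^ 2 * (‖f z₀‖ ^ 2 + ‖f z‖ ^ 2)) S :=
    (integrableOn_const hvol).add (((integrableOn_const hvol).add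
      ((integrableOn_norm_sq_of_mem_L2h hD hf).mono_set hSD)).const_mul _)
  refine hdom.mono' (((hcont.mono hSD).norm.pow 2).aestronglyMeasurable hS)
    (Eventually.of_forall fun z => ?_)
  rw [Real.norm_of_nonneg (by positivity)]
  by_cases hz : z ∈ closedBall z₀ δ
  · exact (pow_le_pow_left₀ (norm_nonneg _) (hM z hz) 2).trans
      (le_add_of_nonneg_right (by positivity))
  · rw [mem_closedBall, not_le, dist_eq_norm] at hz
    rw [dslope_of_ne f (sub_ne_zero.1 (norm_pos_iff.1 (hδ.trans hz)))]
    exact (norm_slope_sq_le hδ hz.le).trans (le_add_of_nonneg_left (sq_nonneg M))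

lemma circleIntegral_sub_inv_smul_of_dslope_eq_zero {c z₀ : ℂ} {R : ℝ}
    (hf : ContinuousOn f (sphere c R)) (hz₀ : z₀ ∈ ball c R)
    (hzero : ∮ z in C(c, R), dslope f z₀ z = 0) :
    ∮ z in C(c, R), (z - z₀)⁻¹ • f z = (2 * Real.pi * Complex.I : ℂ) • f z₀ := by
  have hR : 0 ≤ R := (pos_of_mem_ball hz₀).le
  have hne : ∀ z ∈ sphere c R, z - z₀ ≠ 0 := fun z hz h =>
    (mem_ball.1 hz₀).ne (sub_eq_zero.1 h ▸ hz)
  have hinv : ContinuousOn (fun z => (z - z₀)⁻¹) (sphere c R) :=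
    (continuousOn_id.sub continuousOn_const).inv₀ hne
  have hslope : ∀ z ∈ sphere c R,
      dslope f z₀ z = (z - z₀)⁻¹ • f z - (z - z₀)⁻¹ • f z₀ := fun z hz => by
    rw [dslope_of_ne f (sub_ne_zero.1 (hne z hz)), ← smul_sub]
    rfl
  have hint : CircleIntegrable (fun z => (z - z₀)⁻¹ • f z) c R := (hinv.smul hf).circleIntegrable hR
  have hint₀ : CircleIntegrable (fun z => (z - z₀)⁻¹ • f z₀) c R :=
    (hinv.smul continuousOn_const).circleIntegrable hR
  rwa [circleIntegral.integral_congr hR hslope, circleIntegral.integral_sub hint hint₀,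
    sub_eq_zero, circleIntegral.integral_smul_const,
    circleIntegral.integral_sub_inv_of_mem_ball hz₀] at hzero

lemma differentiableOn_circleIntegral_sub_inv_smul {c : ℂ} {R : ℝ} (hR : 0 < R)
    (hf : CircleIntegrable f c R) :
    DifferentiableOn ℂ (fun w => (2 * Real.pi * Complex.I : ℂ)⁻¹ •
      ∮ z in C(c, R), (z - w)⁻¹ • f z) (ball c R) := by
  lift R to ℝ≥0 using hR.le
  exact Metric.eball_coe (x := c) ▸ (hasFPowerSeriesOn_cauchy_integral hf hR).differentiableOn

lemma IsEvansPotentialOn.exists_extension {p : ℂ → ℝ} {q : ℂ → ℂ} {c : ℂ} {R : ℝ}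
    (hp : IsEvansPotentialOn p q K (closedBall c R)) (hR : 0 < R)
    (hK : Disjoint (sphere c R) K) (hD : IsOpen D) (hKD : closedBall c R \ K ⊆ D)
    (hf : f ∈ L2h D) :
    ∃ F : ℂ → ℂ, DifferentiableOn ℂ F (ball c R) ∧ EqOn F f (ball c R ∩ D) := by
  have hcont : ContinuousOn f (sphere c R) := hf.1.continuousOn.mono fun z hz =>
    hKD ⟨sphere_subset_closedBall hz, hK.notMem_of_mem_left hz⟩
  refine ⟨_, differentiableOn_circleIntegral_sub_inv_smul hR (hcont.circleIntegrable hR.le),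
    fun z₀ hz₀ => ?_⟩
  have hint : IntegrableOn (fun z => ‖dslope f z₀ z‖ ^ 2) (ball c R \ K) :=
    integrableOn_norm_dslope_sq hD hf hz₀.2 (measurableSet_ball.diff hp.isClosed.measurableSet)
      ((sdiff_subset_sdiff_left ball_subset_closedBall).trans hKD)
      ((measure_mono sdiff_subset).trans_lt measure_ball_lt_top).ne
  have hzero := hp.circleIntegral_eq_zero hR.le hK (fun z hz =>
    ((Complex.differentiableOn_dslope (hD.mem_nhds hz₀.2)).2 hf.1).differentiableAt
      (hD.mem_nhds (hKD hz))) hint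
  simp only [circleIntegral_sub_inv_smul_of_dslope_eq_zero hcont hz₀.1 hzero]
  exact inv_smul_smul₀ Complex.two_pi_I_ne_zero _

lemma exists_radius_disjoint_sphere {ν : Measure ℂ} [IsFiniteMeasure ν]
    (hν : ∀ x ∈ K, logPotential ν x = ⊤) (w : ℂ) {ρ : ℝ} (hρ : 0 < ρ) :
    ∃ r ∈ Ioo 0 ρ, Disjoint (sphere w r) K := by
  obtain ⟨r, hr, hrK⟩ := exists_mem_Ioo_notMem_of_volume_eq_zero
    (volume_image_eq_zero_of_logPotential_eq_top hν (LipschitzWith.dist_left w)) hρ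
  exact ⟨r, hr, disjoint_left.2 fun z hz hzK => hrK ⟨z, hzK, hz⟩⟩

lemma not_isL2hDomainOfHolomorphy_of_logPotential_eq_top (hD : IsOpen D) {w : ℂ}
    (hw : w ∈ frontier D) {ρ : ℝ} (hρ : 0 < ρ) (hρ4 : ρ ≤ 1 / 4) {ν : Measure ℂ}
    [IsProbabilityMeasure ν] (hν : ∀ᵐ ξ ∂ν, ξ ∈ closedBall w ρ \ D)
    (htop : ∀ x ∈ closedBall w ρ \ D, logPotential ν x = ⊤) : ¬ IsL2hDomainOfHolomorphy D := by
  intro hL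
  obtain ⟨r, hr, hrK⟩ := exists_radius_disjoint_sphere htop w hρ
  have hrρ : closedBall w r ⊆ closedBall w ρ := closedBall_subset_closedBall hr.2.le
  have hp := isEvansPotentialOn_logPotential ((isCompact_closedBall w ρ).diff hD) hν htop
    (s := closedBall w r) fun z hz ξ hξ => by
      rw [← dist_eq_norm]
      linarith [dist_triangle_right z ξ w, mem_closedBall.1 (hrρ hz), mem_closedBall.1 hξ.1]
  obtain ⟨x, hx⟩ :=
    mem_closure_iff.1 (frontier_subset_closure hw) _ isOpen_ball (mem_ball_self hr.1)
  obtain ⟨δ, hδ, hδD⟩ := Metric.isOpen_iff.1 (isOpen_ball.inter hD) x hx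
  refine hL ⟨ball x δ, ball w r, isOpen_ball, isConnected_ball hδ, isOpen_ball,
    isConnected_ball hr.1, hδD, fun h => (hD.frontier_eq ▸ hw).2 (h (mem_ball_self hr.1)),
    fun f hf => ?_⟩
  obtain ⟨F, hF, hFf⟩ := hp.exists_extension hr.1 hrK hD
    (fun z hz => by_contra fun hzD => hz.2 ⟨hrρ hz.1, hzD⟩) hf
  exact ⟨F, hF, hFf.mono hδD⟩

theorem IsL2hDomainOfHolomorphy.not_polarSet (hL : IsL2hDomainOfHolomorphy D) (hD : IsOpen D)
    {w : ℂ} (hw : w ∈ frontier D) {V : Set ℂ} (hV : V ∈ 𝓝 w) : ¬ PolarSet (V \ D) := by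
  intro hpol
  have hwD : w ∉ D := (hD.frontier_eq ▸ hw).2
  obtain ⟨U, hU, hUc, hwU, u, hu, hne, hbot⟩ := hpol w ⟨mem_of_mem_nhds hV, hwD⟩
  obtain ⟨ρ₀, hρ₀, hρ₀U⟩ :=
    Metric.nhds_basis_closedBall.mem_iff.1 (inter_mem hV (hU.mem_nhds hwU))
  obtain ⟨ρ, hρ, hρle⟩ : ∃ ρ > 0, ρ ≤ min ρ₀ (1 / 4) := ⟨_, lt_min hρ₀ (by norm_num), le_rfl⟩
  have hρ4 : ρ ≤ 1 / 4 := hρle.trans (min_le_right _ _)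
  have hρU : closedBall w ρ ⊆ V ∩ U :=
    (closedBall_subset_closedBall (hρle.trans (min_le_left _ _))).trans hρ₀U
  have hK : IsCompact (closedBall w (ρ / 4) \ D) := (isCompact_closedBall w _).diff hD
  have huK : ∀ z ∈ closedBall w (ρ / 4) \ D, u z = ⊥ := fun z hz => by
    have hzU := hρU (closedBall_subset_closedBall (by linarith) hz.1)
    exact hbot z ⟨⟨hzU.1, hz.2⟩, hzU.2⟩
  rcases exists_logPotential_le_or_eq_top hK ⟨w, mem_closedBall_self (by positivity), hwD⟩ with
    ⟨μ, _, hμ, C, hC⟩ | ⟨ν, _, hν, htop⟩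
  · exact hu.false_of_logPotential_le hU hUc hne hρ hρ4 (hρU.trans inter_subset_right) hK
      sdiff_subset huK hμ hC
  · exact not_isL2hDomainOfHolomorphy_of_logPotential_eq_top hD hw (by positivity : 0 < ρ / 4)
      (by linarith) hν htop hL

end Extension

/-! ### Square-integrable Cauchy transforms -/

lemma integral_inv_max {h R : ℝ} (hh : 0 < h) (hR : h ≤ R) :
    ∫ r in (0 : ℝ)..R, (max r h)⁻¹ = 1 + Real.log (R / h) := by
  have hint : ∀ a b, IntervalIntegrable (fun r : ℝ => (max r h)⁻¹) volume a b := fun a b =>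
    Continuous.intervalIntegrable ((continuous_id.max continuous_const).inv₀ fun r =>
      (lt_max_of_lt_right hh).ne') a b
  have hleft : ∫ r in (0 : ℝ)..h, (max r h)⁻¹ = 1 := by
    rw [intervalIntegral.integral_congr (g := fun _ => h⁻¹) fun r hr =>
      congrArg _ (max_eq_right (uIcc_of_le hh.le ▸ hr).2), intervalIntegral.integral_const,
      sub_zero, smul_eq_mul, mul_inv_cancel₀ hh.ne']
  have hright : ∫ r in h..R, (max r h)⁻¹ = Real.log (R / h) := by
    rw [intervalIntegral.integral_congr (g := fun r => r⁻¹) fun r hr =>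
      congrArg _ (max_eq_left (uIcc_of_le hR ▸ hr).1), integral_inv_of_pos hh (hh.trans_le hR)]
  rw [← intervalIntegral.integral_add_adjacent_intervals (hint 0 h) (hint h R), hleft, hright]

lemma lintegral_ball_inv_norm_mul_inv_max {h R : ℝ} (hh : 0 < h) (hR : h ≤ R) :
    ∫⁻ y in ball (0 : ℂ) R, ENNReal.ofReal (‖y‖⁻¹ * (max ‖y‖ h)⁻¹) =
      ENNReal.ofReal (2 * Real.pi * (1 + Real.log (R / h))) := by
  have hcancel : EqOn (fun r : ℝ => r ^ (Module.finrank ℝ ℂ - 1) • (r⁻¹ * (max r h)⁻¹))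
      (fun r => (max r h)⁻¹) (Ioi 0) := fun r hr => by
    simp only [Complex.finrank_real_complex, Nat.add_one_sub_one, pow_one, smul_eq_mul]
    rw [mul_inv_cancel_left₀ (ne_of_gt hr)]
  have hcont : Continuous fun r : ℝ => (max r h)⁻¹ :=
    (continuous_id.max continuous_const).inv₀ fun r => (lt_max_of_lt_right hh).ne'
  have hint : IntegrableOn (fun y : ℂ => ‖y‖⁻¹ * (max ‖y‖ h)⁻¹) (ball 0 R) := by
    rw [integrableOn_fun_norm_addHaar volume (f := fun r => r⁻¹ * (max r h)⁻¹),
      integrableOn_congr_fun (hcancel.mono Ioo_subset_Ioi_self) measurableSet_Ioo]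
    exact (hcont.integrableOn_Icc (a := 0) (b := R)).mono_set Ioo_subset_Icc_self
  rw [← ofReal_integral_eq_lintegral_ofReal hint (Eventually.of_forall fun y => by positivity)]
  congr 1
  have hball : volume.real (ball (0 : ℂ) 1) = Real.pi := by
    simp [Measure.real, Complex.volume_ball]
  have hind : (ball (0 : ℂ) R).indicator (fun y => ‖y‖⁻¹ * (max ‖y‖ h)⁻¹) =
      fun y => (Iio R).indicator (fun r => r⁻¹ * (max r h)⁻¹) ‖y‖ := by
    ext y
    simp only [indicator, mem_ball_zero_iff, mem_Iio]
  rw [← integral_indicator measurableSet_ball, hind,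
    integral_fun_norm_addHaar volume, Complex.finrank_real_complex, hball]
  have hradial : EqOn (fun r : ℝ => r ^ (2 - 1) • (Iio R).indicator (fun r => r⁻¹ * (max r h)⁻¹) r)
      ((Iio R).indicator fun r => (max r h)⁻¹) (Ioi 0) := fun r hr => by
    by_cases hrR : r ∈ Iio R
    · simpa only [indicator_of_mem hrR, Complex.finrank_real_complex] using hcancel hr
    · simp only [indicator_of_notMem hrR, smul_zero]
  rw [setIntegral_congr_fun measurableSet_Ioi hradial, setIntegral_indicator measurableSet_Iio,
    Ioi_inter_Iio, ← integral_Ioc_eq_integral_Ioo,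
    ← intervalIntegral.integral_of_le (hh.le.trans hR), integral_inv_max hh hR]
  simp only [nsmul_eq_mul, smul_eq_mul, Nat.cast_ofNat, mul_assoc]

lemma setLIntegral_inv_norm_mul_inv_max_le {D : Set ℂ} {h R : ℝ} {η : ℂ} (hh : 0 < h)
    (hR : h ≤ R) (hη : D ⊆ ball η R) :
    ∫⁻ z in D, ENNReal.ofReal (‖z - η‖⁻¹ * (max ‖z - η‖ h)⁻¹) ≤
      ENNReal.ofReal (2 * Real.pi * (1 + Real.log (R / h))) := by
  rw [← lintegral_ball_inv_norm_mul_inv_max hh hR,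
    ← (measurePreserving_sub_right volume η).setLIntegral_comp_preimage measurableSet_ball
      (by fun_prop)]
  refine lintegral_mono_set fun z hz => ?_
  rw [mem_preimage, mem_ball_zero_iff, ← mem_ball_iff_norm]
  exact hη hz

lemma inv_norm_mul_inv_norm_le {ζ ξ : ℂ} (hne : ζ ≠ ξ) (z : ℂ) :
    ‖z - ζ‖⁻¹ * ‖z - ξ‖⁻¹ ≤ ‖z - ζ‖⁻¹ * (max ‖z - ζ‖ (‖ζ - ξ‖ / 2))⁻¹ +
      ‖z - ξ‖⁻¹ * (max ‖z - ξ‖ (‖ζ - ξ‖ / 2))⁻¹ := by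
  have hpos : 0 < ‖ζ - ξ‖ / 2 := half_pos (norm_pos_iff.2 (sub_ne_zero.2 hne))
  have htri : ‖ζ - ξ‖ ≤ ‖z - ξ‖ + ‖z - ζ‖ := by
    rw [← sub_sub_sub_cancel_left ξ ζ z]
    exact norm_sub_le _ _
  rcases le_total ‖z - ζ‖ ‖z - ξ‖ with hle | hle
  · refine le_add_of_le_of_nonneg ?_ (by positivity)
    gcongr
    exact max_le hle (by linarith)
  · refine le_add_of_nonneg_of_le (by positivity) ?_
    rw [mul_comm]
    gcongr
    exact max_le hle (by linarith)

lemma setLIntegral_inv_mul_inv_le {D : Set ℂ} {R : ℝ} {ζ ξ : ℂ} (hζ : D ⊆ ball ζ R)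
    (hξ : D ⊆ ball ξ R) (hR : ‖ζ - ξ‖ ≤ 2 * R) :
    ∫⁻ z in D, ‖(z - ζ)⁻¹‖ₑ * ‖(z - ξ)⁻¹‖ₑ ≤
      ENNReal.ofReal (4 * Real.pi) *
        (ENNReal.ofReal (1 + Real.log (2 * R)) + logKernel (ζ - ξ)) := by
  rcases eq_or_ne ζ ξ with rfl | hne
  · rw [sub_self, logKernel_zero, add_top, ENNReal.mul_top (by simp [Real.pi_pos])]
    exact le_top
  have hpos : 0 < ‖ζ - ξ‖ := norm_pos_iff.2 (sub_ne_zero.2 hne)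
  set h := ‖ζ - ξ‖ / 2
  have hh : 0 < h := half_pos hpos
  have hhR : h ≤ R := by grind
  have hlog : Real.log (R / h) = Real.log (2 * R) - Real.log ‖ζ - ξ‖ := by
    rw [← Real.log_div (by linarith) hpos.ne', div_div_eq_mul_div, mul_comm]
  have hnonneg : 0 ≤ 2 * Real.pi * (1 + Real.log (R / h)) := by
    have := Real.log_nonneg ((one_le_div hh).2 hhR)
    positivity
  calc ∫⁻ z in D, ‖(z - ζ)⁻¹‖ₑ * ‖(z - ξ)⁻¹‖ₑ
      ≤ ∫⁻ z in D, (ENNReal.ofReal (‖z - ζ‖⁻¹ * (max ‖z - ζ‖ h)⁻¹) +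
          ENNReal.ofReal (‖z - ξ‖⁻¹ * (max ‖z - ξ‖ h)⁻¹)) := lintegral_mono fun z => by
        rw [← ENNReal.ofReal_add (by positivity) (by positivity), ← ofReal_norm, ← ofReal_norm,
          ← ENNReal.ofReal_mul (norm_nonneg _), norm_inv, norm_inv]
        exact ENNReal.ofReal_le_ofReal (inv_norm_mul_inv_norm_le hne z)
    _ ≤ ENNReal.ofReal (2 * Real.pi * (1 + Real.log (R / h))) +
          ENNReal.ofReal (2 * Real.pi * (1 + Real.log (R / h))) := by
        rw [lintegral_add_left (by fun_prop)]
        exact add_le_add (setLIntegral_inv_norm_mul_inv_max_le hh hhR hζ)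
          (setLIntegral_inv_norm_mul_inv_max_le hh hhR hξ)
    _ = ENNReal.ofReal (4 * Real.pi) *
          ENNReal.ofReal (1 + Real.log (2 * R) + -Real.log ‖ζ - ξ‖) := by
        rw [← ENNReal.ofReal_mul (by positivity), ← ENNReal.ofReal_add hnonneg hnonneg, hlog]
        ring_nf
    _ ≤ _ := by
        gcongr
        exact ENNReal.ofReal_add_le.trans (by gcongr; exact ofReal_neg_log_le_logKernel le_rfl)

lemma lintegral_lintegral_sq {α β : Type*} [MeasurableSpace α] [MeasurableSpace β]
    {ν : Measure α} [SFinite ν] {μ : Measure β} [SFinite μ] {k : α → β → ℝ≥0∞}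
    (hk : Measurable fun p : α × β => k p.1 p.2) :
    ∫⁻ x, (∫⁻ y, k x y ∂μ) ^ 2 ∂ν = ∫⁻ y, ∫⁻ y', ∫⁻ x, k x y * k x y' ∂ν ∂μ ∂μ := by
  have hsq : ∀ x, (∫⁻ y, k x y ∂μ) ^ 2 = ∫⁻ p, k x p.1 * k x p.2 ∂μ.prod μ := fun x => by
    have hkx : Measurable (k x) := hk.comp measurable_prodMk_left
    rw [sq, lintegral_prod_mul hkx.aemeasurable hkx.aemeasurable]
  have hmeas : Measurable fun q : α × β × β => k q.1 q.2.1 * k q.1 q.2.2 :=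
    (hk.comp (measurable_fst.prodMk measurable_snd.fst)).mul
      (hk.comp (measurable_fst.prodMk measurable_snd.snd))
  simp only [hsq]
  rw [lintegral_lintegral_swap hmeas.aemeasurable,
    lintegral_prod _ hmeas.lintegral_prod_left'.aemeasurable]

lemma setLIntegral_sq_lintegral_inv_lt_top {D K : Set ℂ} {μ : Measure ℂ} [IsProbabilityMeasure μ]
    {C : ℝ} (hD : Bornology.IsBounded D) (hK : Bornology.IsBounded K) (hμ : ∀ᵐ ξ ∂μ, ξ ∈ K)
    (hC : ∀ ζ ∈ K, logPotential μ ζ ≤ ENNReal.ofReal C) :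
    ∫⁻ z in D, (∫⁻ ζ, ‖(z - ζ)⁻¹‖ₑ ∂μ) ^ 2 < ⊤ := by
  obtain ⟨R, hR⟩ := (hD.union hK).subset_ball 0
  have hball : ∀ ζ ∈ K, D ⊆ ball ζ (2 * R) := fun ζ hζ z hz => by
    have hz' := mem_ball_zero_iff.1 (hR (Or.inl hz))
    have hζ' := mem_ball_zero_iff.1 (hR (Or.inr hζ))
    exact mem_ball_iff_norm.2 ((norm_sub_le z ζ).trans_lt (by linarith))
  have hdist : ∀ ζ ∈ K, ∀ ξ ∈ K, ‖ζ - ξ‖ ≤ 2 * (2 * R) := fun ζ hζ ξ hξ => by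
    have hζ' := mem_ball_zero_iff.1 (hR (Or.inr hζ))
    have hξ' := mem_ball_zero_iff.1 (hR (Or.inr hξ))
    linarith [norm_sub_le ζ ξ, norm_nonneg ζ]
  rw [lintegral_lintegral_sq (by fun_prop)]
  calc ∫⁻ ζ, ∫⁻ ξ, (∫⁻ z in D, ‖(z - ζ)⁻¹‖ₑ * ‖(z - ξ)⁻¹‖ₑ) ∂μ ∂μ
      ≤ ∫⁻ ζ, ∫⁻ ξ, ENNReal.ofReal (4 * Real.pi) *
          (ENNReal.ofReal (1 + Real.log (2 * (2 * R))) + logKernel (ζ - ξ)) ∂μ ∂μ := by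
        refine lintegral_mono_ae (hμ.mono fun ζ hζ => lintegral_mono_ae (hμ.mono fun ξ hξ => ?_))
        exact setLIntegral_inv_mul_inv_le (hball ζ hζ) (hball ξ hξ) (hdist ζ hζ ξ hξ)
    _ = ∫⁻ ζ, ENNReal.ofReal (4 * Real.pi) *
          (ENNReal.ofReal (1 + Real.log (2 * (2 * R))) + logPotential μ ζ) ∂μ := by
        refine lintegral_congr fun ζ => ?_
        rw [lintegral_const_mul' _ _ ENNReal.ofReal_ne_top, lintegral_add_left measurable_const,
          lintegral_const, measure_univ, mul_one, logPotential]
    _ ≤ ∫⁻ _, ENNReal.ofReal (4 * Real.pi) *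
          (ENNReal.ofReal (1 + Real.log (2 * (2 * R))) + ENNReal.ofReal C) ∂μ :=
        lintegral_mono_ae (hμ.mono fun ζ hζ => by gcongr; exact hC ζ hζ)
    _ < ⊤ := by
        rw [lintegral_const, measure_univ, mul_one]
        exact ENNReal.mul_lt_top ENNReal.ofReal_lt_top
          (ENNReal.add_lt_top.2 ⟨ENNReal.ofReal_lt_top, ENNReal.ofReal_lt_top⟩)

lemma enorm_cauchyTransform_le {μ : Measure ℂ} (g : ℂ → ℂ) (z : ℂ) :
    ‖cauchyTransform μ g z‖ₑ ≤ eLpNorm g ⊤ μ * ∫⁻ ζ, ‖(z - ζ)⁻¹‖ₑ ∂μ :=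
  calc ‖cauchyTransform μ g z‖ₑ ≤ ∫⁻ ζ, ‖g ζ * (z - ζ)⁻¹‖ₑ ∂μ := enorm_integral_le_lintegral_enorm _
    _ ≤ ∫⁻ ζ, eLpNorm g ⊤ μ * ‖(z - ζ)⁻¹‖ₑ ∂μ := by
        refine lintegral_mono_ae ((enorm_ae_le_eLpNormEssSup g μ).mono fun ζ hζ => ?_)
        rw [enorm_mul, eLpNorm_exponent_top]
        gcongr
    _ = eLpNorm g ⊤ μ * ∫⁻ ζ, ‖(z - ζ)⁻¹‖ₑ ∂μ := lintegral_const_mul _ (by fun_prop)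

lemma cauchyTransform_mem_L2h {D K : Set ℂ} {μ : Measure ℂ} [IsProbabilityMeasure μ] {g : ℂ → ℂ}
    {C : ℝ} (hD : Bornology.IsBounded D) (hK : IsCompact K) (hDK : Disjoint D K)
    (hμ : ∀ᵐ ξ ∂μ, ξ ∈ K) (hC : ∀ ζ ∈ K, logPotential μ ζ ≤ ENNReal.ofReal C)
    (hg : MemLp g ⊤ μ) : cauchyTransform μ g ∈ L2h D := by
  refine ⟨(differentiableOn_cauchyTransform hK.isClosed hμ (hg.integrable le_top)).mono
    hDK.subset_compl_right, ?_⟩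
  calc ∫⁻ z in D, ‖cauchyTransform μ g z‖ₑ ^ 2
      ≤ ∫⁻ z in D, eLpNorm g ⊤ μ ^ 2 * (∫⁻ ζ, ‖(z - ζ)⁻¹‖ₑ ∂μ) ^ 2 := lintegral_mono fun z => by
        rw [← mul_pow]
        gcongr
        exact enorm_cauchyTransform_le g z
    _ = eLpNorm g ⊤ μ ^ 2 * ∫⁻ z in D, (∫⁻ ζ, ‖(z - ζ)⁻¹‖ₑ ∂μ) ^ 2 :=
        lintegral_const_mul' _ _ (ENNReal.pow_ne_top hg.eLpNorm_ne_top)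
    _ < ⊤ := ENNReal.mul_lt_top (ENNReal.pow_lt_top hg.eLpNorm_lt_top)
        (setLIntegral_sq_lintegral_inv_lt_top hD hK.isBounded hμ hC)

/-! ### Cauchy transforms that do not extend -/

section DualNorm

variable {α : Type*} [MeasurableSpace α] {μ : Measure α}

lemma exists_Lp_top_integral_mul_eq_integral_norm {k : α → ℂ} (hk : AEStronglyMeasurable k μ) :
    ∃ g : Lp ℂ ⊤ μ, ‖g‖ ≤ 1 ∧ ∫ x, g x * k x ∂μ = (∫ x, ‖k x‖ ∂μ : ℝ) := by
  have hbound : ∀ᵐ x ∂μ, ‖starRingEnd ℂ (k x) / ‖k x‖‖ ≤ 1 := Eventually.of_forall fun x => by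
    rw [norm_div, RCLike.norm_conj, Complex.norm_real, norm_norm]
    exact div_self_le_one _
  have hmeas : AEStronglyMeasurable (fun x => starRingEnd ℂ (k x) / ‖k x‖) μ :=
    ((Complex.continuous_conj.comp_aestronglyMeasurable hk).aemeasurable.div
      (Complex.continuous_ofReal.comp_aestronglyMeasurable
        hk.norm).aemeasurable).aestronglyMeasurable
  have hmem := memLp_top_of_bound hmeas 1 hbound
  refine ⟨hmem.toLp, ?_, ?_⟩
  · rw [Lp.norm_toLp]
    refine ENNReal.toReal_le_of_le_ofReal zero_le_one ?_
    rw [eLpNorm_exponent_top]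
    exact eLpNormEssSup_le_of_ae_bound hbound
  · rw [← integral_complex_ofReal]
    refine integral_congr_ae (hmem.coeFn_toLp.mono fun x hx => ?_)
    dsimp only
    rw [hx, div_mul_eq_mul_div, ← Complex.normSq_eq_conj_mul_self, Complex.normSq_eq_norm_sq, sq,
      Complex.ofReal_mul, mul_self_div_self]

lemma exists_integral_norm_le_of_integral_mul_bounded {ι : Type*} {k : ι → α → ℂ}
    (hk : ∀ i, Integrable (k i) μ)
    (hb : ∀ g, MemLp g ⊤ μ → ∃ C, ∀ i, ‖∫ x, g x * k i x ∂μ‖ ≤ C) :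
    ∃ C, ∀ i, ∫ x, ‖k i x‖ ∂μ ≤ C := by
  let T : ι → Lp ℂ ⊤ μ →L[ℂ] ℂ := fun i =>
    ((ContinuousLinearMap.mul ℂ ℂ).lpPairing μ ⊤ 1).flip (memLp_one_iff_integrable.2 (hk i)).toLp
  have hT : ∀ i (g : Lp ℂ ⊤ μ), T i g = ∫ x, g x * k i x ∂μ := fun i g => by
    rw [ContinuousLinearMap.flip_apply, ContinuousLinearMap.lpPairing_eq_integral]
    refine integral_congr_ae ((memLp_one_iff_integrable.2 (hk i)).coeFn_toLp.mono fun x hx => ?_)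
    dsimp only
    rw [hx, ContinuousLinearMap.mul_apply']
  obtain ⟨C, hC⟩ := banach_steinhaus (g := T) fun g => by
    simpa only [hT] using hb g (Lp.memLp g)
  refine ⟨C, fun i => ?_⟩
  obtain ⟨g, hg, hgk⟩ := exists_Lp_top_integral_mul_eq_integral_norm (hk i).aestronglyMeasurable
  calc ∫ x, ‖k i x‖ ∂μ ≤ ‖T i g‖ := by
        rw [hT, hgk, Complex.norm_real]
        exact Real.le_norm_self _
    _ ≤ ‖T i‖ * ‖g‖ := (T i).le_opNorm g
    _ ≤ C := (mul_le_of_le_one_right (norm_nonneg _) hg).trans (hC i)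

end DualNorm

lemma lintegral_enorm_inv_sq_lt_top {K : Set ℂ} {μ : Measure ℂ} [IsFiniteMeasure μ] {z : ℕ → ℂ}
    {ζ : ℂ} (hK : IsClosed K) (hμ : ∀ᵐ ξ ∂μ, ξ ∈ K) (hz : ∀ n, z n ∉ K)
    (hlim : Tendsto z atTop (𝓝 ζ))
    (hb : ∀ g, MemLp g ⊤ μ → ∃ C, ∀ n, ‖∫ ξ, g ξ * -(z n - ξ)⁻¹ ^ 2 ∂μ‖ ≤ C) :
    ∫⁻ ξ, ‖ζ - ξ‖ₑ⁻¹ ^ 2 ∂μ < ⊤ := by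
  have hint : ∀ n, Integrable (fun ξ => -(z n - ξ)⁻¹ ^ 2) μ := fun n => by
    obtain ⟨η, hη₀, hη⟩ := exists_forall_le_norm_sub hK (hz n)
    refine Integrable.of_bound (by fun_prop) (η⁻¹ ^ 2) (hμ.mono fun ξ hξ => ?_)
    rw [norm_neg, norm_pow, norm_inv]
    gcongr
    exact hη ξ hξ
  obtain ⟨C, hC⟩ := exists_integral_norm_le_of_integral_mul_bounded hint hb
  have hle : ∀ n, ∫⁻ ξ, ‖z n - ξ‖ₑ⁻¹ ^ 2 ∂μ ≤ ENNReal.ofReal C := fun n =>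
    calc ∫⁻ ξ, ‖z n - ξ‖ₑ⁻¹ ^ 2 ∂μ = ∫⁻ ξ, ‖-(z n - ξ)⁻¹ ^ 2‖ₑ ∂μ :=
          lintegral_congr_ae (hμ.mono fun ξ hξ => by
            dsimp only
            rw [enorm_neg, enorm_pow, enorm_inv (sub_ne_zero.2 fun h : z n = ξ => hz n (h ▸ hξ))])
      _ = ENNReal.ofReal (∫ ξ, ‖-(z n - ξ)⁻¹ ^ 2‖ ∂μ) :=
          (ofReal_integral_norm_eq_lintegral_enorm (hint n)).symm
      _ ≤ ENNReal.ofReal C := ENNReal.ofReal_le_ofReal (hC n)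
  calc ∫⁻ ξ, ‖ζ - ξ‖ₑ⁻¹ ^ 2 ∂μ = ∫⁻ ξ, liminf (fun n => ‖z n - ξ‖ₑ⁻¹ ^ 2) atTop ∂μ :=
        lintegral_congr fun ξ =>
          (ENNReal.Tendsto.pow (hlim.sub_const ξ).enorm.inv).liminf_eq.symm
    _ ≤ liminf (fun n => ∫⁻ ξ, ‖z n - ξ‖ₑ⁻¹ ^ 2 ∂μ) atTop :=
        lintegral_liminf_le fun n => by fun_prop
    _ ≤ ENNReal.ofReal C :=
        liminf_le_of_frequently_le' (Eventually.of_forall hle).frequently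
    _ < ⊤ := ENNReal.ofReal_lt_top

lemma measure_closedBall_le_mul_lintegral {E : Type*} [SeminormedAddCommGroup E]
    [MeasurableSpace E] [OpensMeasurableSpace E] (μ : Measure E) (x : E) (n : ℕ) {s : ℝ}
    (hs : 0 < s) : μ (closedBall x s) ≤
      ENNReal.ofReal s ^ n * ∫⁻ ξ in closedBall x s, ‖x - ξ‖ₑ⁻¹ ^ n ∂μ := by
  rw [← lintegral_const_mul' _ _ (ENNReal.pow_ne_top ENNReal.ofReal_ne_top), ← setLIntegral_one]
  refine setLIntegral_mono' measurableSet_closedBall fun ξ hξ => ?_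
  rw [← mul_pow]
  refine one_le_pow₀ ?_
  rw [← div_eq_mul_inv, ENNReal.le_div_iff_mul_le (Or.inr (by simpa using hs))
    (Or.inr ENNReal.ofReal_ne_top), one_mul, ← ofReal_norm]
  exact ENNReal.ofReal_le_ofReal (mem_closedBall_iff_norm'.1 hξ)

/-- Where the integral is finite, the `n`-dimensional density of `μ` vanishes, whereas the density
of an `n`-dimensional Haar measure with respect to `μ` is finite `μ`-almost everywhere. -/
lemma ae_lintegral_enorm_inv_pow_finrank_eq_top {E : Type*} [NormedAddCommGroup E]
    [NormedSpace ℝ E] [FiniteDimensional ℝ E] [Nontrivial E] [MeasurableSpace E] [BorelSpace E]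
    (μ : Measure E) [IsFiniteMeasure μ] :
    ∀ᵐ x ∂μ, ∫⁻ ξ, ‖x - ξ‖ₑ⁻¹ ^ Module.finrank ℝ E ∂μ = ⊤ := by
  set n := Module.finrank ℝ E
  have hn : n ≠ 0 := Module.finrank_pos.ne'
  let ν : Measure E := Measure.addHaar
  filter_upwards [Besicovitch.ae_tendsto_rnDeriv ν μ, Measure.rnDeriv_lt_top ν μ]
    with x hlim hfin
  by_contra hI
  let ε : ℝ → ℝ≥0∞ := fun s => ∫⁻ ξ in closedBall x s, ‖x - ξ‖ₑ⁻¹ ^ n ∂μ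
  have hball : ∀ s > 0, μ (closedBall x s) ≤ ENNReal.ofReal s ^ n * ε s := fun s =>
    measure_closedBall_le_mul_lintegral μ x n
  have hpow : Tendsto (fun s => ENNReal.ofReal s ^ n * ∫⁻ ξ, ‖x - ξ‖ₑ⁻¹ ^ n ∂μ) (𝓝[>] 0)
      (𝓝 0) := by
    have hcont : Continuous fun s : ℝ => ENNReal.ofReal s ^ n :=
      (ENNReal.continuous_pow n).comp ENNReal.continuous_ofReal
    simpa [hn] using ENNReal.Tendsto.mul_const ((hcont.tendsto 0).mono_left nhdsWithin_le_nhds)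
      (Or.inr hI)
  have hμ : Tendsto (fun s => μ (closedBall x s)) (𝓝[>] 0) (𝓝 0) :=
    tendsto_of_tendsto_of_tendsto_of_le_of_le' tendsto_const_nhds hpow
      (Eventually.of_forall fun _ => zero_le) (eventually_mem_nhdsWithin.mono fun s hs =>
        (hball s hs).trans (by gcongr; exact setLIntegral_le_lintegral _ _))
  have hε : Tendsto (fun s => ν (ball 0 1) / ε s) (𝓝[>] 0) (𝓝 ⊤) := by
    have := ENNReal.Tendsto.const_div (a := ν (ball 0 1)) (tendsto_setLIntegral_zero hI hμ)
      (Or.inr measure_ball_lt_top.ne)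
    rwa [ENNReal.div_zero (measure_ball_pos ν 0 one_pos).ne'] at this
  have hratio : ∀ᶠ s in 𝓝[>] 0, ν (ball 0 1) / ε s ≤ ν (closedBall x s) / μ (closedBall x s) :=
    eventually_mem_nhdsWithin.mono fun s (hs : 0 < s) => by
      rw [Measure.addHaar_closedBall ν x hs.le, ENNReal.ofReal_pow hs.le,
        ← ENNReal.mul_div_mul_left _ (ε s) (pow_ne_zero n (by simpa using hs))
          (ENNReal.pow_ne_top ENNReal.ofReal_ne_top)]
      exact ENNReal.div_le_div_left (hball s hs) _
  exact hfin.ne (tendsto_nhds_unique hlim (tendsto_nhds_top_mono hε hratio))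

lemma disjoint_frontier_connectedComponentIn {X : Type*} [TopologicalSpace X]
    [LocallyConnectedSpace X] {U : Set X} (hU : IsOpen U) (p : X) :
    Disjoint (frontier (connectedComponentIn U p)) U := by
  refine disjoint_left.2 fun q hq hqU => ?_
  have hq' : q ∈ connectedComponentIn U q := mem_connectedComponentIn hqU
  obtain ⟨y, hyq, hyp⟩ := mem_closure_iff.1 (frontier_subset_closure hq) _
    hU.connectedComponentIn hq'
  rw [hU.connectedComponentIn.frontier_eq] at hq
  rw [connectedComponentIn_eq hyq, ← connectedComponentIn_eq hyp] at hq'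
  exact hq.2 hq'

lemma exists_mem_frontier_of_not_subset {X : Type*} [TopologicalSpace X] {S V : Set X}
    (hS : IsPreconnected S) (hV : IsOpen V) (hne : (S ∩ V).Nonempty) (hSV : ¬ S ⊆ V) :
    ∃ w ∈ S, w ∈ frontier V := by
  by_contra! hfr
  refine hSV (hS.subset_of_closure_inter_subset hV hne fun z hz => ?_)
  by_contra hzV
  exact hfr z hz.2 (hV.frontier_eq ▸ ⟨hz.1, hzV⟩)

lemma exists_mem_nhds_diff_subset {V : Set ℂ} {w : ℂ} {r : ℝ} (hV : IsOpen V)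
    (hw : w ∈ frontier V) (hr : 0 < r)
    (hre : volume (Complex.re '' (closedBall w r ∩ frontier V)) = 0)
    (him : volume (Complex.im '' (closedBall w r ∩ frontier V)) = 0) :
    ∃ U ∈ 𝓝 w, U \ V ⊆ closedBall w r ∩ frontier V := by
  set K := closedBall w r ∩ frontier V
  set B := Ioo (w.re - r / 2) (w.re + r / 2) ×ℂ Ioo (w.im - r / 2) (w.im + r / 2)
  have hB : B ∈ 𝓝 w := (isOpen_Ioo.reProdIm isOpen_Ioo).mem_nhds
    ⟨⟨by linarith, by linarith⟩, by linarith, by linarith⟩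
  have hBball : B ⊆ closedBall w r := by
    rintro z ⟨⟨hre₁, hre₂⟩, him₁, him₂⟩
    rw [mem_closedBall_iff_norm]
    refine (Complex.norm_le_abs_re_add_abs_im _).trans ?_
    rw [Complex.sub_re, Complex.sub_im, ← add_halves r]
    exact add_le_add (abs_le.2 ⟨by linarith, by linarith⟩) (abs_le.2 ⟨by linarith, by linarith⟩)
  obtain ⟨z, hzB, hzV⟩ := mem_closure_iff_nhds.1 (frontier_subset_closure hw) B hB
  have hzK : z ∉ K := fun hz => (hV.frontier_eq ▸ hz.2).2 hzV
  have hBK : B \ K ⊆ V := by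
    refine (isPreconnected_reProdIm_diff hre him _ _ _ _).subset_of_closure_inter_subset hV
      ⟨z, ⟨hzB, hzK⟩, hzV⟩ fun q ⟨hqV, hqB, hqK⟩ => ?_
    by_contra hq
    exact hqK ⟨hBball hqB, hV.frontier_eq ▸ ⟨hqV, hq⟩⟩
  exact ⟨B, hB, sdiff_subset_comm.1 hBK⟩

lemma PolarSet.mono {P Q : Set ℂ} (hQ : PolarSet Q) (hPQ : P ⊆ Q) : PolarSet P := fun z hz => by
  obtain ⟨U, hUo, hUc, hzU, u, hu, hne, hbot⟩ := hQ z (hPQ hz)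
  exact ⟨U, hUo, hUc, hzU, u, hu, hne, fun x hx => hbot x ⟨hPQ hx.1, hx.2⟩⟩

lemma polarSet_of_logPotential_eq_top {K : Set ℂ} {ν : Measure ℂ} [IsProbabilityMeasure ν] {w : ℂ}
    {r : ℝ} (hr₀ : 0 ≤ r) (hr : r < 1 / 4) (hK : IsClosed K) (hKw : K ⊆ closedBall w r)
    (hνK : ∀ᵐ ξ ∂ν, ξ ∈ K) (hν : ∀ x ∈ K, logPotential ν x = ⊤) : PolarSet K := fun z hz => by
  obtain ⟨s, hrs, hs⟩ := exists_between hr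
  have hdist : dist (w + s) w = s := by simp [abs_of_pos (hr₀.trans_lt hrs)]
  have hsK : w + s ∉ K := fun h => hrs.not_ge (hdist ▸ mem_closedBall.1 (hKw h))
  refine ⟨ball w (1 / 4), isOpen_ball, isConnected_ball (by norm_num),
    closedBall_subset_ball hr (hKw hz), fun z => -(logPotential ν z : EReal),
    subharmonicOn_neg_logPotential (hνK.mono fun ξ hξ =>
      closedBall_subset_closedBall hr.le (hKw hξ)), ⟨w + s, by rwa [mem_ball, hdist], ?_⟩,
    fun x hx => ?_⟩
  · rw [Ne, EReal.neg_eq_bot_iff, EReal.coe_ennreal_eq_top_iff]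
    exact (logPotential_lt_top hK hνK hsK).ne
  · dsimp only
    rw [hν x hx.1, EReal.coe_ennreal_top, EReal.neg_top]

lemma lintegral_enorm_inv_sq_lt_top_of_extension {D D₁ V K : Set ℂ} {μ : Measure ℂ}
    [IsProbabilityMeasure μ] {C : ℝ} (hD : Bornology.IsBounded D) (hD₁ : IsOpen D₁)
    (hV : IsOpen V) (hVD : V ⊆ D) (hK : IsCompact K) (hDK : Disjoint D K)
    (hμ : ∀ᵐ ξ ∂μ, ξ ∈ K) (hC : ∀ ζ ∈ K, logPotential μ ζ ≤ ENNReal.ofReal C)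
    (hext : ∀ f ∈ L2h D, ∃ F : ℂ → ℂ, DifferentiableOn ℂ F D₁ ∧ EqOn F f V)
    {ζ : ℂ} (hζ : ζ ∈ D₁) (hζV : ζ ∈ closure V) : ∫⁻ ξ, ‖ζ - ξ‖ₑ⁻¹ ^ 2 ∂μ < ⊤ := by
  obtain ⟨z, hzV, hlim⟩ := mem_closure_iff_seq_limit.1 hζV
  have hzK : ∀ n, z n ∉ K := fun n => disjoint_left.1 hDK (hVD (hzV n))
  refine lintegral_enorm_inv_sq_lt_top hK.isClosed hμ hzK hlim fun g hg => ?_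
  obtain ⟨F, hF, hFV⟩ := hext _ (cauchyTransform_mem_L2h hD hK hDK hμ hC hg)
  have hderiv : ∀ n, deriv F (z n) = ∫ ξ, g ξ * -(z n - ξ)⁻¹ ^ 2 ∂μ := fun n => by
    obtain ⟨η, hη₀, hη⟩ := exists_forall_le_norm_sub hK.isClosed (hzK n)
    rw [(hFV.eventuallyEq_of_mem (hV.mem_nhds (hzV n))).deriv_eq]
    exact (hasDerivAt_cauchyTransform (hg.integrable le_top) hη₀ (hμ.mono hη)).deriv
  have hcont : ContinuousAt (deriv F) ζ :=
    ((hF.deriv hD₁).differentiableAt (hD₁.mem_nhds hζ)).continuousAt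
  obtain ⟨M, hM⟩ := (hcont.tendsto.comp hlim).norm.bddAbove_range
  exact ⟨M, fun n => hderiv n ▸ hM ⟨n, rfl⟩⟩

lemma eqOn_connectedComponentIn_of_eqOn_nhds {D D₀ D₁ : Set ℂ} {p : ℂ} (hD : IsOpen D)
    (hD₁ : IsOpen D₁) (hD₀ : D₀ ∈ 𝓝 p) (hp : p ∈ D ∩ D₁) {f : ℂ → ℂ} (hf : DifferentiableOn ℂ f D)
    {F : ℂ → ℂ} (hF : DifferentiableOn ℂ F D₁) (hFf : EqOn F f D₀) :
    EqOn F f (connectedComponentIn (D ∩ D₁) p) := by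
  have hV : IsOpen (connectedComponentIn (D ∩ D₁) p) := (hD.inter hD₁).connectedComponentIn
  have hVs := connectedComponentIn_subset (D ∩ D₁) p
  exact AnalyticOnNhd.eqOn_of_preconnected_of_eventuallyEq
    ((hF.mono (hVs.trans inter_subset_right)).analyticOnNhd hV)
    ((hf.mono (hVs.trans inter_subset_left)).analyticOnNhd hV)
    isPreconnected_connectedComponentIn (mem_connectedComponentIn hp)
    (hFf.eventuallyEq_of_mem hD₀)

lemma exists_mem_nhds_polarSet_diff {D D₁ V : Set ℂ} {w : ℂ} (hD : Bornology.IsBounded D)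
    (hD₁ : IsOpen D₁) (hV : IsOpen V) (hVD : V ⊆ D) (hfr : Disjoint (frontier V) (D ∩ D₁))
    (hext : ∀ f ∈ L2h D, ∃ F : ℂ → ℂ, DifferentiableOn ℂ F D₁ ∧ EqOn F f V)
    (hw : w ∈ D₁) (hwV : w ∈ frontier V) : ∃ U ∈ 𝓝 w, PolarSet (U \ D) := by
  obtain ⟨r₀, hr₀, hr₀D₁⟩ := nhds_basis_closedBall.mem_iff.1 (hD₁.mem_nhds hw)
  obtain ⟨r, hr, hr_lt⟩ := exists_between (lt_min hr₀ (show (0 : ℝ) < 1 / 4 by norm_num))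
  have hrD₁ : closedBall w r ⊆ D₁ :=
    (closedBall_subset_closedBall (hr_lt.le.trans (min_le_left _ _))).trans hr₀D₁
  set K := closedBall w r ∩ frontier V
  have hK : IsCompact K := (isCompact_closedBall w r).inter_right isClosed_frontier
  have hDK : Disjoint D K := disjoint_left.2 fun z hzD hzK =>
    disjoint_left.1 hfr hzK.2 ⟨hzD, hrD₁ hzK.1⟩
  rcases exists_logPotential_le_or_eq_top hK ⟨w, mem_closedBall_self hr.le, hwV⟩ with
    ⟨μ, _, hμ, C, hC⟩ | ⟨ν, _, hνK, hν⟩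
  · have hdens := ae_lintegral_enorm_inv_pow_finrank_eq_top μ
    rw [Complex.finrank_real_complex] at hdens
    obtain ⟨ζ, hζK, hζ⟩ := (hμ.and hdens).exists
    exact absurd hζ (lintegral_enorm_inv_sq_lt_top_of_extension hD hD₁ hV hVD hK hDK hμ hC hext
      (hrD₁ hζK.1) (frontier_subset_closure hζK.2)).ne
  · have hre : LipschitzWith 1 Complex.re := Complex.reCLM_nnnorm ▸ Complex.reCLM.lipschitz
    have him : LipschitzWith 1 Complex.im := Complex.imCLM_nnnorm ▸ Complex.imCLM.lipschitz
    obtain ⟨U, hU, hUK⟩ := exists_mem_nhds_diff_subset hV hwV hr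
      (volume_image_eq_zero_of_logPotential_eq_top hν hre)
      (volume_image_eq_zero_of_logPotential_eq_top hν him)
    exact ⟨U, hU, (polarSet_of_logPotential_eq_top hr.le (hr_lt.trans_le (min_le_right _ _))
      hK.isClosed inter_subset_left hνK hν).mono ((sdiff_subset_sdiff_right hVD).trans hUK)⟩

theorem isL2hDomainOfHolomorphy_of_not_polarSet {D : Set ℂ} (hD : IsOpen D)
    (hbd : Bornology.IsBounded D)
    (hpolar : ∀ w ∈ frontier D, ∀ U ∈ 𝓝 w, ¬ PolarSet (U \ D)) : IsL2hDomainOfHolomorphy D := by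
  rintro ⟨D₀, D₁, hD₀, hD₀c, hD₁, hD₁c, hsub, hnot, hext⟩
  obtain ⟨p, hp⟩ := hD₀c.nonempty
  have hpD : p ∈ D ∩ D₁ := (hsub hp).symm
  set V := connectedComponentIn (D ∩ D₁) p
  have hV : IsOpen V := (hD.inter hD₁).connectedComponentIn
  have hVs : V ⊆ D ∩ D₁ := connectedComponentIn_subset _ _
  have hVD : V ⊆ D := hVs.trans inter_subset_left
  have hfr : Disjoint (frontier V) (D ∩ D₁) :=
    disjoint_frontier_connectedComponentIn (hD.inter hD₁) p
  have hextV : ∀ f ∈ L2h D, ∃ F : ℂ → ℂ, DifferentiableOn ℂ F D₁ ∧ EqOn F f V := fun f hf => by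
    obtain ⟨F, hF, hFf⟩ := hext f hf
    exact ⟨F, hF, eqOn_connectedComponentIn_of_eqOn_nhds hD hD₁ (hD₀.mem_nhds hp) hpD hf.1 hF hFf⟩
  obtain ⟨w, hwD₁, hwV⟩ := exists_mem_frontier_of_not_subset hD₁c.isPreconnected hV
    ⟨p, hpD.2, mem_connectedComponentIn hpD⟩ fun h => hnot (h.trans hVD)
  have hw : w ∈ frontier D := hD.frontier_eq ▸ ⟨closure_mono hVD (frontier_subset_closure hwV),
    fun hwD => disjoint_left.1 hfr hwV ⟨hwD, hwD₁⟩⟩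
  obtain ⟨U, hU, hUD⟩ := exists_mem_nhds_polarSet_diff hbd hD₁ hV hVD hfr hextV hwD₁ hwV
  exact hpolar w hw U hU hUD

theorem l2h_domain_iff_not_polar_general {D : Set ℂ} (hopen : IsOpen D)
    (hbd : Bornology.IsBounded D) :
    IsL2hDomainOfHolomorphy D ↔ ∀ w ∈ frontier D, ∀ U ∈ 𝓝 w, ¬ PolarSet (U \ D) :=
  ⟨fun hL _ hw _ hU => hL.not_polarSet hopen hw hU,
    isL2hDomainOfHolomorphy_of_not_polarSet hopen hbd⟩

/-- **Theorem 4.** A bounded domain `D ⊆ ℂ` is an `L²ₕ`-domain of holomorphy iff for every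
`w ∈ ∂D` and every neighborhood `U` of `w` the set `U \ D` is not polar. -/
theorem l2h_domain_iff_not_polar (D : Set ℂ)
    (hopen : IsOpen D) (hconn : IsConnected D) (hbd : Bornology.IsBounded D) :
    IsL2hDomainOfHolomorphy D ↔
      ∀ w ∈ frontier D, ∀ U ∈ 𝓝 w, ¬ PolarSet (U \ D) := by
  exact l2h_domain_iff_not_polar_general hopen hbd
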